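/- Let q be a braiding matrix with connected Dynkin diagram such that B_q is finite dimensional, and let B be a pre-Nichols algebra of q with finite GKdim. Let i,j,k,ℓ ∈ I_θ be such that q̃_{jk} = q̃_{ij} = q_{jj}^{−1} ∈ G_4' ∪ G_6', q_{ii} = q_{kk} = −1, q̃_{ik} = q̃_{iℓ} = q̃_{jℓ} = 1 and q̃_{jk}³ = q̃_{ℓk}. Then [[x_{ijk}, [x_{ijkℓ}, x_k]_c]_c, x_{jk}]_c = 0 in B. -/

import Mathlib

/-
Common framework for formalizing statements from
"Finite GK-dimensional pre-Nichols algebras of (super)modular and unidentified type"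
(Angiono, Campagnolo, Sanmarco).

We work over `ℂ` (an algebraically closed field of characteristic zero).
A braiding matrix is `q : Fin θ → Fin θ → ℂˣ`.  The tensor algebra `T(V)` of the
associated braided vector space of diagonal type is realized as the free algebra
on `Fin θ`.  The braided bialgebra structure on `T(V)` (the braided coproduct,
uniquely determined by the braiding matrix) is packaged in the structure
`BraidedStr`: its fields characterize it uniquely, so quantifying over
`S : BraidedStr θ q` is equivalent to using "the" braided coproduct.

A pre-Nichols algebra of `q` is the quotient `T(V)/I` by an ℕ₀-homogeneous
(two-sided) braided bi-ideal `I` generated in degrees ≥ 2 (`IsPreNicholsIdeal`);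
such an ideal is automatically contained in the defining ideal `Jq` of the
Nichols algebra, which is the largest such ideal.  A statement
"`x = 0` holds in the pre-Nichols algebra `T(V)/I`" is formalized as `x ∈ I`.
-/

open scoped TensorProduct

noncomputable section

namespace PreNicholsPaper

/-- The tensor algebra `T(V)` of the braided vector space of diagonal type of rank `θ`. -/
abbrev TV (θ : ℕ) := FreeAlgebra ℂ (Fin θ)

/-- The generator `x_i` of `T(V)`. -/
def gen (θ : ℕ) (i : Fin θ) : TV θ := FreeAlgebra.ι ℂ i

/-- The monomial `x_{i_1} ⋯ x_{i_n}` associated to a word. -/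
def wordElem (θ : ℕ) (w : List (Fin θ)) : TV θ := (w.map (gen θ)).prod

/-- The multidegree in `ℕ₀^θ` of a word. -/
def degW (θ : ℕ) (w : List (Fin θ)) : Fin θ → ℕ := fun i => w.count i

/-- `α_i`, the `i`-th canonical basis vector of `ℕ₀^θ`. -/
def δ (θ : ℕ) (i : Fin θ) : Fin θ → ℕ := fun k => if k = i then 1 else 0

/-- The bilinear form `ℕ₀^θ × ℕ₀^θ → ℂˣ` attached to the braiding matrix,
`q(α_i, α_j) = q_{ij}`, evaluated in `ℂ`. -/
def qf {θ : ℕ} (q : Fin θ → Fin θ → ℂˣ) (a b : Fin θ → ℕ) : ℂ :=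
  ∏ i : Fin θ, ∏ j : Fin θ, (q i j : ℂ) ^ (a i * b j)

/-- `q̃_{ij} = q_{ij} q_{ji}`. -/
def qtil {θ : ℕ} (q : Fin θ → Fin θ → ℂˣ) (i j : Fin θ) : ℂ := (q i j : ℂ) * (q j i : ℂ)

/-- The braided commutator `[u,v]_c = uv - q(a,b) vu` of elements `u, v`
which are homogeneous of multidegrees `a`, `b` respectively. -/
def brk {θ : ℕ} (q : Fin θ → Fin θ → ℂˣ) (a b : Fin θ → ℕ) (u v : TV θ) : TV θ :=
  u * v - qf q a b • (v * u)

/-- `(ad_c x_i) y = x_i y - q(α_i, b) y x_i` for `y` homogeneous of multidegree `b`. -/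
def ad1 {θ : ℕ} (q : Fin θ → Fin θ → ℂˣ) (i : Fin θ) (b : Fin θ → ℕ) (y : TV θ) : TV θ :=
  brk q (δ θ i) b (gen θ i) y

/-- The iterated braided adjoint `x_{i_1 i_2 ⋯ i_k} = (ad_c x_{i_1}) x_{i_2 ⋯ i_k}`. -/
def xw {θ : ℕ} (q : Fin θ → Fin θ → ℂˣ) : List (Fin θ) → TV θ
  | [] => 1
  | [i] => gen θ i
  | i :: w => ad1 q i (degW θ w) (xw q w)

/-- `(ad_c x_i)^m x_j`. -/
def adpow {θ : ℕ} (q : Fin θ → Fin θ → ℂˣ) (i j : Fin θ) : ℕ → TV θ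
  | 0 => gen θ j
  | m + 1 => ad1 q i (fun k => m * δ θ i k + δ θ j k) (adpow q i j m)

/-- The homogeneous component of total degree `n` of `T(V)`. -/
def homogTot (θ : ℕ) (n : ℕ) : Submodule ℂ (TV θ) :=
  Submodule.span ℂ {x | ∃ w : List (Fin θ), w.length = n ∧ x = wordElem θ w}

/-- The homogeneous component of multidegree `d ∈ ℕ₀^θ` of `T(V)`. -/
def homogD (θ : ℕ) (d : Fin θ → ℕ) : Submodule ℂ (TV θ) :=
  Submodule.span ℂ {x | ∃ w : List (Fin θ), degW θ w = d ∧ x = wordElem θ w}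

/-- The braided bialgebra structure on `T(V)` determined by the braiding matrix `q`:
the braided coproduct `Δ` together with the multiplication `mulB` of the braided
tensor product `T(V) ⊗ T(V)`.  These axioms determine `Δ` and `mulB` uniquely. -/
structure BraidedStr (θ : ℕ) (q : Fin θ → Fin θ → ℂˣ) where
  Δ : TV θ →ₗ[ℂ] TensorProduct ℂ (TV θ) (TV θ)
  mulB : TensorProduct ℂ (TV θ) (TV θ) →ₗ[ℂ]
    TensorProduct ℂ (TV θ) (TV θ) →ₗ[ℂ] TensorProduct ℂ (TV θ) (TV θ)
  mulB_spec : ∀ (a d : TV θ) (wb wc : List (Fin θ)),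
    mulB (a ⊗ₜ[ℂ] wordElem θ wb) (wordElem θ wc ⊗ₜ[ℂ] d)
      = qf q (degW θ wb) (degW θ wc) • ((a * wordElem θ wc) ⊗ₜ[ℂ] (wordElem θ wb * d))
  Δ_one : Δ 1 = 1 ⊗ₜ[ℂ] 1
  Δ_gen : ∀ i, Δ (gen θ i) = gen θ i ⊗ₜ[ℂ] 1 + 1 ⊗ₜ[ℂ] gen θ i
  Δ_mul : ∀ u v : TV θ, Δ (u * v) = mulB (Δ u) (Δ v)

variable {θ : ℕ} {q : Fin θ → Fin θ → ℂˣ}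

/-- `x` is a primitive element. -/
def IsPrimitiveIn (S : BraidedStr θ q) (x : TV θ) : Prop :=
  S.Δ x = x ⊗ₜ[ℂ] (1 : TV θ) + (1 : TV θ) ⊗ₜ[ℂ] x

/-- The submodule `I ⊗ T(V) + T(V) ⊗ J` of `T(V) ⊗ T(V)`. -/
def mixedPair (I J : Submodule ℂ (TV θ)) : Submodule ℂ (TensorProduct ℂ (TV θ) (TV θ)) :=
  Submodule.span ℂ
    ({x | ∃ a b : TV θ, a ∈ I ∧ x = a ⊗ₜ[ℂ] b} ∪ {x | ∃ a b : TV θ, b ∈ J ∧ x = a ⊗ₜ[ℂ] b})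

/-- The submodule `I ⊗ T(V) + T(V) ⊗ I` of `T(V) ⊗ T(V)`. -/
def mixedSub (I : Submodule ℂ (TV θ)) : Submodule ℂ (TensorProduct ℂ (TV θ) (TV θ)) :=
  mixedPair I I

/-- `I` is the defining ideal of a pre-Nichols algebra of `q`：an ℕ₀-homogeneous
two-sided (bi-)ideal of `T(V)` generated in degrees `≥ 2` which is also a coideal.
Such an ideal is automatically contained in the defining ideal `Jq` of the Nichols
algebra, and the pre-Nichols algebra is the quotient `T(V)/I`. -/
structure IsPreNicholsIdeal (S : BraidedStr θ q) (I : Submodule ℂ (TV θ)) : Prop where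
  mul_left : ∀ a x : TV θ, x ∈ I → a * x ∈ I
  mul_right : ∀ a x : TV θ, x ∈ I → x * a ∈ I
  homog_ge2 : I = Submodule.span ℂ {x | x ∈ I ∧ ∃ n, 2 ≤ n ∧ x ∈ homogTot θ n}
  coideal : ∀ x ∈ I, S.Δ x ∈ mixedSub I

/-- The defining ideal `J_q` of the Nichols algebra `B_q = T(V)/J_q`:
the maximal homogeneous braided Hopf ideal generated in degrees `≥ 2`. -/
def Jq (S : BraidedStr θ q) : Submodule ℂ (TV θ) := sSup {I | IsPreNicholsIdeal S I}

/-- The standard filtration of `T(V)`: span of words of length `≤ n`. -/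
def Wfil (θ : ℕ) (n : ℕ) : Submodule ℂ (TV θ) :=
  Submodule.span ℂ {x | ∃ w : List (Fin θ), w.length ≤ n ∧ x = wordElem θ w}

/-- The quotient algebra `T(V)/I` has finite Gelfand–Kirillov dimension, i.e.
the standard filtration of the (finitely generated) quotient has polynomial growth. -/
def FinGK (I : Submodule ℂ (TV θ)) : Prop :=
  ∃ C d : ℕ, ∀ n : ℕ, Module.finrank ℂ ((Wfil θ n).map I.mkQ) ≤ C * (n + 1) ^ d

/-- The Gelfand–Kirillov dimension of the quotient algebra `T(V)/I`. -/
def GKdim (I : Submodule ℂ (TV θ)) : ℝ :=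
  Filter.limsup
    (fun n : ℕ => Real.log (Module.finrank ℂ ((Wfil θ n).map I.mkQ)) / Real.log n)
    Filter.atTop

/-- `I` defines an eminent pre-Nichols algebra: it is a finite-GKdim pre-Nichols
algebra, and every finite-GKdim pre-Nichols algebra of `q` is a quotient of it. -/
def IsEminent (S : BraidedStr θ q) (I : Submodule ℂ (TV θ)) : Prop :=
  IsPreNicholsIdeal S I ∧ FinGK I ∧
    ∀ I' : Submodule ℂ (TV θ), IsPreNicholsIdeal S I' → FinGK I' → I ≤ I'

/-- The Dynkin diagram of the braiding matrix `q`: vertices `Fin θ`, an edge between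
`i ≠ j` iff `q̃_{ij} ≠ 1`. -/
def dynkin {θ : ℕ} (q : Fin θ → Fin θ → ℂˣ) : SimpleGraph (Fin θ) :=
  SimpleGraph.fromRel (fun i j => qtil q i j ≠ 1)

/-- The quantum number `(m)_t = 1 + t + ⋯ + t^{m-1}`. -/
def qnum (t : ℂ) (m : ℕ) : ℂ := ∑ k ∈ Finset.range m, t ^ k

/-- The set of `n ∈ ℕ₀` such that `(n+1)_{q_{ii}} (1 - q_{ii}^n q̃_{ij}) = 0`,
i.e. such that `(ad_c x_i)^{n+1} x_j = 0` in the Nichols algebra.  The entry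
`c_{ij}` of the generalized Cartan matrix is `-(min of this set)`. -/
def cSet {θ : ℕ} (q : Fin θ → Fin θ → ℂˣ) (i j : Fin θ) : Set ℕ :=
  {n | qnum (q i i : ℂ) (n + 1) * (1 - (q i i : ℂ) ^ n * qtil q i j) = 0}

/-- The generalized Cartan matrix of `q`. -/
def cij {θ : ℕ} (q : Fin θ → Fin θ → ℂˣ) (i j : Fin θ) : ℤ :=
  if i = j then 2 else -(Int.ofNat (sInf (cSet q i j)))

/-- All entries `c_{ij}` are defined at the vertex `i`. -/
def reflectable {θ : ℕ} (q : Fin θ → Fin θ → ℂˣ) (i : Fin θ) : Prop :=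
  ∀ j, j ≠ i → (cSet q i j).Nonempty

/-- The `i`-th reflection of the braiding matrix:
`(r_i q)_{jk} = q(s_i α_j, s_i α_k)` where `s_i α_j = α_j - c_{ij} α_i`. -/
def reflectMat {θ : ℕ} (q : Fin θ → Fin θ → ℂˣ) (i : Fin θ) : Fin θ → Fin θ → ℂˣ :=
  fun j k =>
    q j k * q j i ^ (-(cij q i k)) * q i k ^ (-(cij q i j)) * q i i ^ (cij q i j * cij q i k)

/-- The reflection `s_i` acting on `ℤ^θ`. -/
def sRefl {θ : ℕ} (q : Fin θ → Fin θ → ℂˣ) (i : Fin θ) (β : Fin θ → ℤ) : Fin θ → ℤ :=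
  fun k => β k - (if k = i then ∑ j, cij q i j * β j else 0)

/-- The (real) roots of `q`, together with the base points of the Weyl groupoid at
which they live: pairs `(q', β)` obtained from a simple root of `q` by iterated
reflections. -/
inductive ReachRoot {θ : ℕ} (q₀ : Fin θ → Fin θ → ℂˣ) :
    (Fin θ → Fin θ → ℂˣ) → (Fin θ → ℤ) → Prop
  | simple (j : Fin θ) : ReachRoot q₀ q₀ (fun k => if k = j then 1 else 0)
  | reflect {q' : Fin θ → Fin θ → ℂˣ} {β : Fin θ → ℤ} (i : Fin θ) :
      ReachRoot q₀ q' β → ReachRoot q₀ (reflectMat q' i) (sRefl q' i β)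

/-- `q` has a finite (generalized) root system: all reflections are defined at every
point of the Weyl groupoid, and the set of roots so obtained is finite. -/
def FiniteRootSystem {θ : ℕ} (q : Fin θ → Fin θ → ℂˣ) : Prop :=
  (∀ q' i, (∃ β, ReachRoot q q' β) → reflectable q' i) ∧
    Set.Finite {β : Fin θ → ℤ | ∃ q', ReachRoot q q' β}

/-- Conjecture (Andruskiewitsch–Angiono–Heckenberger): the root system of a Nichols
algebra of diagonal type with finite Gelfand–Kirillov dimension is finite. -/
def AAH : Prop :=
  ∀ (θ : ℕ) (q : Fin θ → Fin θ → ℂˣ) (S : BraidedStr θ q), FinGK (Jq S) → FiniteRootSystem q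

/-- The two-sided ideal of `T(V)` generated by a set. -/
def idealGen (θ : ℕ) (s : Set (TV θ)) : Submodule ℂ (TV θ) :=
  Submodule.span ℂ {x | ∃ g ∈ s, ∃ a b : TV θ, x = a * g * b}

end PreNicholsPaper

namespace PreNicholsPaper

/-!
Homogeneous elements of `T(V)` that are primitive modulo `I` and linearly independent modulo `I`
span a braided vector space of diagonal type, whose braiding matrix consists of the values of
`qf q` at their degrees. The leading terms of the relations among them in `T(V)/I` form the ideal
of a pre-Nichols algebra of this matrix, of `GKdim` at most that of `T(V)/I`; hence, by the AAH
conjecture, the matrix has a finite root system. A primitive element whose degree would produce an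
infinite root system together with some of the generators therefore vanishes modulo `I`.

A root system is infinite as soon as a vertex with label `1` has a neighbour, a pair of vertices is
of affine or indefinite Cartan type, or a sequence of reflections returns to the same diagram and
moves some `v` to `v + η`, where `η ≠ 0` is fixed. Applied to `x_i`, `x_j`, `x_k`, `x_l` this
excludes `q̃_{jk}` of order six, and for order four it forces `q_{ll}` to be one of a few roots of
unity of order dividing `24`. For these, it applies in turn to `x_{ik}`, `x_k²`, `x_{jl}` and then
`[x_{jkl}, x_k]`, so they all vanish modulo `I`. Since `x_{ijkl} = [x_i, x_{jkl}]`, already the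
inner bracket `[x_{ijkl}, x_k]` vanishes.
-/

/-! ### Words, degrees and the bicharacter -/

section Words

variable {θ : ℕ} {q : Fin θ → Fin θ → ℂˣ}

/-- The basis of `T(V)` consisting of words. -/
def wordBasis (θ : ℕ) : Module.Basis (List (Fin θ)) ℂ (TV θ) :=
  (FreeAlgebra.basisFreeMonoid ℂ (Fin θ)).reindex FreeMonoid.toList

lemma wordElem_nil : wordElem θ [] = 1 := rfl

lemma wordElem_cons (i : Fin θ) (w : List (Fin θ)) :
    wordElem θ (i :: w) = gen θ i * wordElem θ w := by
  simp [wordElem]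

lemma wordElem_append (v w : List (Fin θ)) :
    wordElem θ (v ++ w) = wordElem θ v * wordElem θ w := by
  simp [wordElem]

lemma wordElem_singleton (i : Fin θ) : wordElem θ [i] = gen θ i := by
  simp [wordElem]

lemma wordBasis_apply (w : List (Fin θ)) : wordBasis θ w = wordElem θ w := by
  have h : (FreeAlgebra.equivMonoidAlgebraFreeMonoid (R := ℂ) (X := Fin θ)).symm
      (MonoidAlgebra.of ℂ (FreeMonoid (Fin θ)) (FreeMonoid.ofList w)) = wordElem θ w := by
    change MonoidAlgebra.lift ℂ _ _ (FreeMonoid.lift (FreeAlgebra.ι ℂ)) _ = _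
    rw [MonoidAlgebra.lift_of, FreeMonoid.lift_apply]
    rfl
  rw [← h]
  simp only [wordBasis, Module.Basis.reindex_apply, FreeAlgebra.basisFreeMonoid,
    Module.Basis.map_apply, Finsupp.coe_basisSingleOne]
  rfl

lemma coord_wordElem (v w : List (Fin θ)) :
    (wordBasis θ).coord v (wordElem θ w) = if w = v then 1 else 0 := by
  rw [← wordBasis_apply, Module.Basis.coord_apply, Module.Basis.repr_self, Finsupp.single_apply]

lemma linearMap_ext_words {M : Type*} [AddCommMonoid M] [Module ℂ M] {f g : TV θ →ₗ[ℂ] M}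
    (h : ∀ w, f (wordElem θ w) = g (wordElem θ w)) : f = g :=
  (wordBasis θ).ext fun w => by simpa only [wordBasis_apply] using h w

lemma tensor_ext_words {M : Type*} [AddCommMonoid M] [Module ℂ M]
    {f g : TV θ ⊗[ℂ] TV θ →ₗ[ℂ] M}
    (h : ∀ v w, f (wordElem θ v ⊗ₜ wordElem θ w) = g (wordElem θ v ⊗ₜ wordElem θ w)) : f = g :=
  TensorProduct.ext <| linearMap_ext_words fun v => linearMap_ext_words fun w => h v w

lemma degW_nil : degW θ [] = 0 := funext fun _ => List.count_nil

lemma degW_append (v w : List (Fin θ)) : degW θ (v ++ w) = degW θ v + degW θ w :=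
  funext fun _ => List.count_append

lemma degW_singleton (i : Fin θ) : degW θ [i] = δ θ i := by
  ext k
  simp only [degW, δ, List.count_singleton, beq_iff_eq]
  exact if_congr eq_comm rfl rfl

lemma degW_cons (i : Fin θ) (w : List (Fin θ)) : degW θ (i :: w) = δ θ i + degW θ w := by
  rw [← degW_singleton, ← degW_append, List.singleton_append]

lemma length_eq_sum_degW (w : List (Fin θ)) : w.length = ∑ t, degW θ w t := by
  induction w with
  | nil => simp [degW_nil]
  | cons i w ih => simp [degW_cons, Finset.sum_add_distrib, ← ih, δ, add_comm]

lemma qf_add_left (a b c : Fin θ → ℕ) : qf q (a + b) c = qf q a c * qf q b c := by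
  simp [qf, add_mul, pow_add, Finset.prod_mul_distrib]

lemma qf_add_right (a b c : Fin θ → ℕ) : qf q a (b + c) = qf q a b * qf q a c := by
  simp [qf, mul_add, pow_add, Finset.prod_mul_distrib]

lemma qf_zero_left (a : Fin θ → ℕ) : qf q 0 a = 1 := by simp [qf]

lemma qf_zero_right (a : Fin θ → ℕ) : qf q a 0 = 1 := by simp [qf]

lemma qf_delta (i j : Fin θ) : qf q (δ θ i) (δ θ j) = q i j := by
  rw [qf, Finset.prod_eq_single i, Finset.prod_eq_single j] <;> simp +contextual [δ]

lemma qf_ne_zero (a b : Fin θ → ℕ) : qf q a b ≠ 0 := by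
  simp [qf, Finset.prod_ne_zero_iff]

end Words

/-! ### Subspaces spanned by words -/

section WordSpan

variable {θ : ℕ} {P Q R : List (Fin θ) → Prop}

/-- The span of the words satisfying `P`. The graded components `homogTot`, `homogD` and the
filtration `Wfil` are definitionally of this form. -/
def wordSpan (P : List (Fin θ) → Prop) : Submodule ℂ (TV θ) :=
  Submodule.span ℂ {x | ∃ w, P w ∧ x = wordElem θ w}

lemma wordElem_mem_wordSpan {w : List (Fin θ)} (h : P w) : wordElem θ w ∈ wordSpan P :=
  Submodule.subset_span ⟨w, h, rfl⟩

lemma wordSpan_mono (h : ∀ w, P w → Q w) : wordSpan P ≤ wordSpan Q :=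
  Submodule.span_mono fun _ ⟨w, hw, e⟩ => ⟨w, h w hw, e⟩

lemma map_mem_of_mem_wordSpan {M : Type*} [AddCommMonoid M] [Module ℂ M] {f : TV θ →ₗ[ℂ] M}
    {p : Submodule ℂ M} (h : ∀ w, P w → f (wordElem θ w) ∈ p) {x : TV θ} (hx : x ∈ wordSpan P) :
    f x ∈ p := by
  suffices wordSpan P ≤ p.comap f from this hx
  refine Submodule.span_le.2 ?_
  rintro _ ⟨w, hw, rfl⟩
  exact h w hw

lemma map_eq_of_mem_wordSpan {M : Type*} [AddCommMonoid M] [Module ℂ M] {f g : TV θ →ₗ[ℂ] M}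
    (h : ∀ w, P w → f (wordElem θ w) = g (wordElem θ w)) {x : TV θ} (hx : x ∈ wordSpan P) :
    f x = g x := by
  refine LinearMap.eqOn_span ?_ hx
  rintro _ ⟨w, hw, rfl⟩
  exact h w hw

lemma mul_mem_wordSpan (h : ∀ v w, P v → Q w → R (v ++ w)) {x y : TV θ} (hx : x ∈ wordSpan P)
    (hy : y ∈ wordSpan Q) : x * y ∈ wordSpan R := by
  refine map_mem_of_mem_wordSpan (f := LinearMap.mulRight ℂ y) (fun v hv => ?_) hx
  refine map_mem_of_mem_wordSpan (f := LinearMap.mulLeft ℂ (wordElem θ v)) (fun w hw => ?_) hy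
  rw [LinearMap.mulLeft_apply, ← wordElem_append]
  exact wordElem_mem_wordSpan (h v w hv hw)

lemma mem_wordSpan_true (x : TV θ) : x ∈ wordSpan fun _ : List (Fin θ) => True := by
  have h := (wordBasis θ).mem_span x
  refine Submodule.span_mono ?_ h
  rintro _ ⟨w, rfl⟩
  exact ⟨w, trivial, wordBasis_apply w⟩

lemma map_mem_of_words {M : Type*} [AddCommMonoid M] [Module ℂ M] {f : TV θ →ₗ[ℂ] M}
    {p : Submodule ℂ M} (h : ∀ w, f (wordElem θ w) ∈ p) (x : TV θ) : f x ∈ p :=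
  map_mem_of_mem_wordSpan (fun w _ => h w) (mem_wordSpan_true x)

lemma one_mem_homogD : (1 : TV θ) ∈ homogD θ 0 :=
  wordElem_mem_wordSpan (P := fun w => degW θ w = 0) degW_nil

lemma gen_mem_homogD (i : Fin θ) : gen θ i ∈ homogD θ (δ θ i) :=
  wordElem_singleton i ▸ wordElem_mem_wordSpan (degW_singleton i)

lemma mul_mem_homogD {a b : Fin θ → ℕ} {x y : TV θ} (hx : x ∈ homogD θ a) (hy : y ∈ homogD θ b) :
    x * y ∈ homogD θ (a + b) :=
  mul_mem_wordSpan (fun v w hv hw => by rw [degW_append, hv, hw]) hx hy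

lemma homogD_le_homogTot (d : Fin θ → ℕ) : homogD θ d ≤ homogTot θ (∑ t, d t) :=
  wordSpan_mono fun w hw => by rw [length_eq_sum_degW, hw]

lemma homogTot_le_Wfil (n : ℕ) : homogTot θ n ≤ Wfil θ n := wordSpan_mono fun _ => le_of_eq

lemma Wfil_mono {a b : ℕ} (h : a ≤ b) : Wfil θ a ≤ Wfil θ b := wordSpan_mono fun _ hw => hw.trans h

lemma mul_mem_Wfil {a b : ℕ} {x y : TV θ} (hx : x ∈ Wfil θ a) (hy : y ∈ Wfil θ b) :
    x * y ∈ Wfil θ (a + b) :=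
  mul_mem_wordSpan (fun v w hv hw => by simpa using add_le_add hv hw) hx hy

end WordSpan

/-! ### Diagonal operators and the projections onto the graded components -/

section Scaling

variable {θ : ℕ} {q : Fin θ → Fin θ → ℂˣ}

/-- The diagonal operator on `T(V)` multiplying each word `w` by the scalar `c w`. -/
def wordScale (c : List (Fin θ) → ℂ) : TV θ →ₗ[ℂ] TV θ :=
  (wordBasis θ).constr ℂ fun w => c w • wordElem θ w

lemma wordScale_wordElem (c : List (Fin θ) → ℂ) (w : List (Fin θ)) :
    wordScale c (wordElem θ w) = c w • wordElem θ w := by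
  rw [← wordBasis_apply, wordScale, Module.Basis.constr_basis, wordBasis_apply]

lemma wordScale_of_mem {P : List (Fin θ) → Prop} {c : List (Fin θ) → ℂ} {s : ℂ}
    (h : ∀ w, P w → c w = s) {x : TV θ} (hx : x ∈ wordSpan P) : wordScale c x = s • x :=
  map_eq_of_mem_wordSpan (g := s • LinearMap.id)
    (fun w hw => by rw [wordScale_wordElem, h w hw]; rfl) hx

lemma wordScale_one : wordScale (1 : List (Fin θ) → ℂ) = LinearMap.id :=
  linearMap_ext_words fun w => by simp [wordScale_wordElem]

lemma wordScale_mul (c d : List (Fin θ) → ℂ) :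
    wordScale (c * d) = wordScale c ∘ₗ wordScale d :=
  linearMap_ext_words fun w => by simp [wordScale_wordElem, smul_smul, mul_comm]

/-- The automorphism `y ↦ q(a, deg y) y` of `T(V)`. -/
def actL (q : Fin θ → Fin θ → ℂˣ) (a : Fin θ → ℕ) : TV θ →ₗ[ℂ] TV θ :=
  wordScale fun w => qf q a (degW θ w)

/-- The automorphism `y ↦ q(deg y, a) y` of `T(V)`. -/
def actR (q : Fin θ → Fin θ → ℂˣ) (a : Fin θ → ℕ) : TV θ →ₗ[ℂ] TV θ :=
  wordScale fun w => qf q (degW θ w) a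

lemma actL_zero : actL q 0 = LinearMap.id := by
  simp only [actL, qf_zero_left]
  exact wordScale_one

lemma actR_zero : actR q 0 = LinearMap.id := by
  simp only [actR, qf_zero_right]
  exact wordScale_one

lemma actL_add (a b : Fin θ → ℕ) : actL q (a + b) = actL q a ∘ₗ actL q b := by
  simp only [actL, qf_add_left]
  exact wordScale_mul _ _

lemma actR_add (a b : Fin θ → ℕ) : actR q (a + b) = actR q a ∘ₗ actR q b := by
  simp only [actR, qf_add_right]
  exact wordScale_mul _ _

lemma actL_wordElem (a : Fin θ → ℕ) (w : List (Fin θ)) :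
    actL q a (wordElem θ w) = qf q a (degW θ w) • wordElem θ w :=
  wordScale_wordElem _ w

lemma actR_wordElem (a : Fin θ → ℕ) (w : List (Fin θ)) :
    actR q a (wordElem θ w) = qf q (degW θ w) a • wordElem θ w :=
  wordScale_wordElem _ w

lemma actR_of_mem_homogD (a : Fin θ → ℕ) {b : Fin θ → ℕ} {x : TV θ} (hx : x ∈ homogD θ b) :
    actR q a x = qf q b a • x :=
  wordScale_of_mem (fun w hw => by rw [hw]) hx

/-- The projection of `T(V)` onto its component of total degree `r`. -/
def lenProj (θ r : ℕ) : TV θ →ₗ[ℂ] TV θ := wordScale fun w => if w.length = r then 1 else 0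

lemma lenProj_wordElem (r : ℕ) (w : List (Fin θ)) :
    lenProj θ r (wordElem θ w) = if w.length = r then wordElem θ w else 0 := by
  rw [lenProj, wordScale_wordElem, ite_smul, one_smul, zero_smul]

lemma lenProj_mem_homogTot (r : ℕ) (x : TV θ) : lenProj θ r x ∈ homogTot θ r := by
  refine map_mem_of_words (fun w => ?_) x
  rw [lenProj_wordElem]
  split_ifs with h
  · exact wordElem_mem_wordSpan h
  · exact zero_mem _

lemma lenProj_of_mem_homogTot {r : ℕ} {x : TV θ} (hx : x ∈ homogTot θ r) : lenProj θ r x = x := by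
  simpa [lenProj] using wordScale_of_mem (s := 1) (fun w hw => if_pos hw) hx

/-- The span of the words of length `< r`. -/
def lowerWords (θ r : ℕ) : Submodule ℂ (TV θ) := wordSpan fun w => w.length < r

lemma lenProj_of_mem_lowerWords {r : ℕ} {x : TV θ} (hx : x ∈ lowerWords θ r) :
    lenProj θ r x = 0 := by
  simpa [lenProj] using wordScale_of_mem (s := 0) (fun w hw => if_neg (Nat.ne_of_lt hw)) hx

lemma sub_lenProj_mem_lowerWords {r : ℕ} {x : TV θ} (hx : x ∈ Wfil θ r) :
    x - lenProj θ r x ∈ lowerWords θ r := by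
  refine map_mem_of_mem_wordSpan (f := LinearMap.id - lenProj θ r) (fun w hw => ?_) hx
  rw [LinearMap.sub_apply, LinearMap.id_apply, lenProj_wordElem]
  split_ifs with h
  · exact (sub_self (wordElem θ w)).symm ▸ zero_mem _
  · exact (sub_zero (wordElem θ w)).symm ▸ wordElem_mem_wordSpan (lt_of_le_of_ne hw h)

end Scaling

/-! ### Existence of the braided coproduct -/

section Existence

variable {θ : ℕ} (q : Fin θ → Fin θ → ℂˣ)

/-- The multiplication of the braided tensor product `T(V) ⊗ T(V)`. -/
def braidedMul : TV θ ⊗[ℂ] TV θ →ₗ[ℂ] TV θ ⊗[ℂ] TV θ →ₗ[ℂ] TV θ ⊗[ℂ] TV θ :=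
  let b := (wordBasis θ).tensorProduct (wordBasis θ)
  b.constr ℂ fun u => b.constr ℂ fun v =>
    qf q (degW θ u.2) (degW θ v.1) • (wordElem θ (u.1 ++ v.1) ⊗ₜ[ℂ] wordElem θ (u.2 ++ v.2))

lemma braidedMul_words (a b c d : List (Fin θ)) :
    braidedMul q (wordElem θ a ⊗ₜ wordElem θ b) (wordElem θ c ⊗ₜ wordElem θ d) =
      qf q (degW θ b) (degW θ c) • (wordElem θ (a ++ c) ⊗ₜ[ℂ] wordElem θ (b ++ d)) := by
  have h (v w : List (Fin θ)) : wordElem θ v ⊗ₜ[ℂ] wordElem θ w =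
      (wordBasis θ).tensorProduct (wordBasis θ) (v, w) := by
    rw [Module.Basis.tensorProduct_apply, wordBasis_apply, wordBasis_apply]
  rw [h a b, h c d, braidedMul, Module.Basis.constr_basis, Module.Basis.constr_basis]

lemma braidedMul_spec (a d : TV θ) (wb wc : List (Fin θ)) :
    braidedMul q (a ⊗ₜ[ℂ] wordElem θ wb) (wordElem θ wc ⊗ₜ[ℂ] d) =
      qf q (degW θ wb) (degW θ wc) • ((a * wordElem θ wc) ⊗ₜ[ℂ] (wordElem θ wb * d)) := by
  have h := tensor_ext_words (θ := θ)
    (f := TensorProduct.lift (((braidedMul q).compl₁₂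
      ((TensorProduct.mk ℂ (TV θ) (TV θ)).flip (wordElem θ wb))
      (TensorProduct.mk ℂ (TV θ) (TV θ) (wordElem θ wc)))))
    (g := qf q (degW θ wb) (degW θ wc) • TensorProduct.map
      (LinearMap.mulRight ℂ (wordElem θ wc)) (LinearMap.mulLeft ℂ (wordElem θ wb)))
    (fun v w => by simp [braidedMul_words, wordElem_append])
  simpa using LinearMap.congr_fun h (a ⊗ₜ d)

lemma braidedMul_assoc (X Y Z : TV θ ⊗[ℂ] TV θ) :
    braidedMul q X (braidedMul q Y Z) = braidedMul q (braidedMul q X Y) Z := by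
  have h : (LinearMap.llcomp ℂ _ _ _).compl₁₂ (braidedMul q) (braidedMul q) =
      (LinearMap.llcomp ℂ _ _ _ (braidedMul q)) ∘ₗ braidedMul q := by
    refine tensor_ext_words fun a b => tensor_ext_words fun c d => tensor_ext_words fun e f => ?_
    simp only [LinearMap.compl₁₂_apply, LinearMap.llcomp_apply, LinearMap.comp_apply,
      braidedMul_words, map_smul, LinearMap.smul_apply, smul_smul, List.append_assoc,
      degW_append, qf_add_left, qf_add_right]
    congr 1
    ring
  simpa using LinearMap.congr_fun (LinearMap.congr_fun (LinearMap.congr_fun h X) Y) Z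

lemma braidedMul_one_left : braidedMul q (1 ⊗ₜ 1) = LinearMap.id :=
  tensor_ext_words fun a b => by
    rw [← wordElem_nil, braidedMul_words]; simp [degW_nil, qf_zero_left]

lemma braidedMul_one_right (X : TV θ ⊗[ℂ] TV θ) : braidedMul q X (1 ⊗ₜ 1) = X := by
  have h : (braidedMul q).flip (1 ⊗ₜ 1) = LinearMap.id := tensor_ext_words fun a b => by
    rw [← wordElem_nil, LinearMap.flip_apply, braidedMul_words]; simp [degW_nil, qf_zero_right]
  exact LinearMap.congr_fun h X

/-- Left multiplication by `Δ u` on the braided tensor product, as an algebra map in `u`. -/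
def coprodEnd : TV θ →ₐ[ℂ] Module.End ℂ (TV θ ⊗[ℂ] TV θ) :=
  FreeAlgebra.lift ℂ fun i => braidedMul q (gen θ i ⊗ₜ 1 + 1 ⊗ₜ gen θ i)

lemma coprodEnd_gen (i : Fin θ) :
    coprodEnd q (gen θ i) = braidedMul q (gen θ i ⊗ₜ 1 + 1 ⊗ₜ gen θ i) :=
  FreeAlgebra.lift_ι_apply _ i

lemma coprodEnd_eq_braidedMul (u : TV θ) :
    coprodEnd q u = braidedMul q (coprodEnd q u (1 ⊗ₜ 1)) := by
  have h : (coprodEnd q).toLinearMap =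
      braidedMul q ∘ₗ LinearMap.applyₗ (1 ⊗ₜ 1) ∘ₗ (coprodEnd q).toLinearMap := by
    refine linearMap_ext_words fun w => ?_
    simp only [AlgHom.toLinearMap_apply, LinearMap.comp_apply, LinearMap.applyₗ_apply_apply]
    induction w with
    | nil => rw [wordElem_nil, map_one, Module.End.one_apply, braidedMul_one_left]; rfl
    | cons i w ih =>
      refine LinearMap.ext fun Y => ?_
      rw [wordElem_cons, map_mul, Module.End.mul_apply, Module.End.mul_apply, ih,
        coprodEnd_gen, braidedMul_assoc, ← ih]
  exact LinearMap.congr_fun h u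

/-- The braided bialgebra structure on `T(V)`. -/
def braidedStr : BraidedStr θ q where
  Δ := LinearMap.applyₗ (1 ⊗ₜ 1) ∘ₗ (coprodEnd q).toLinearMap
  mulB := braidedMul q
  mulB_spec := braidedMul_spec q
  Δ_one := by simp
  Δ_gen i := by
    rw [LinearMap.comp_apply, AlgHom.toLinearMap_apply, LinearMap.applyₗ_apply_apply,
      coprodEnd_gen, braidedMul_one_right]
  Δ_mul u v := by
    simp only [LinearMap.comp_apply, AlgHom.toLinearMap_apply, map_mul,
      LinearMap.applyₗ_apply_apply, Module.End.mul_apply]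
    rw [← coprodEnd_eq_braidedMul]

end Existence

/-! ### The coproduct and the subspace `I ⊗ T(V) + T(V) ⊗ I` -/

section Coproduct

variable {θ : ℕ} {q : Fin θ → Fin θ → ℂˣ}

namespace BraidedStr

variable (S : BraidedStr θ q)

lemma mulB_wordElem_right (a b d : TV θ) (w : List (Fin θ)) :
    S.mulB (a ⊗ₜ b) (wordElem θ w ⊗ₜ d) =
      (a * wordElem θ w) ⊗ₜ (actR q (degW θ w) b * d) := by
  have h : (S.mulB.flip (wordElem θ w ⊗ₜ d)) ∘ₗ TensorProduct.mk ℂ (TV θ) (TV θ) a =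
      TensorProduct.mk ℂ (TV θ) (TV θ) (a * wordElem θ w) ∘ₗ LinearMap.mulRight ℂ d ∘ₗ
        actR q (degW θ w) :=
    linearMap_ext_words fun v => by simp [S.mulB_spec, actR_wordElem]
  exact LinearMap.congr_fun h b

lemma mulB_wordElem_left (a c d : TV θ) (w : List (Fin θ)) :
    S.mulB (a ⊗ₜ wordElem θ w) (c ⊗ₜ d) =
      (a * actL q (degW θ w) c) ⊗ₜ (wordElem θ w * d) := by
  have h : S.mulB (a ⊗ₜ wordElem θ w) ∘ₗ (TensorProduct.mk ℂ (TV θ) (TV θ)).flip d =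
      (TensorProduct.mk ℂ (TV θ) (TV θ)).flip (wordElem θ w * d) ∘ₗ LinearMap.mulLeft ℂ a ∘ₗ
        actL q (degW θ w) :=
    linearMap_ext_words fun v => by simp [S.mulB_spec, actL_wordElem, TensorProduct.smul_tmul']
  exact LinearMap.congr_fun h c

lemma mulB_homog {β γ : Fin θ → ℕ} (a d : TV θ) {b c : TV θ}
    (hb : b ∈ homogD θ β) (hc : c ∈ homogD θ γ) :
    S.mulB (a ⊗ₜ b) (c ⊗ₜ d) = qf q β γ • ((a * c) ⊗ₜ (b * d)) := by
  refine map_eq_of_mem_wordSpan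
    (f := S.mulB (a ⊗ₜ b) ∘ₗ (TensorProduct.mk ℂ (TV θ) (TV θ)).flip d)
    (g := qf q β γ • (TensorProduct.mk ℂ (TV θ) (TV θ)).flip (b * d) ∘ₗ LinearMap.mulLeft ℂ a)
    (fun w hw => ?_) hc
  simp [S.mulB_wordElem_right, actR_of_mem_homogD _ hb, hw]

lemma mulB_gen_words (i : Fin θ) (v w : List (Fin θ)) :
    S.mulB (gen θ i ⊗ₜ 1 + 1 ⊗ₜ gen θ i) (wordElem θ v ⊗ₜ wordElem θ w) =
      wordElem θ (i :: v) ⊗ₜ wordElem θ w +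
        qf q (δ θ i) (degW θ v) • (wordElem θ v ⊗ₜ wordElem θ (i :: w)) := by
  have hv : wordElem θ v ∈ homogD θ (degW θ v) := wordElem_mem_wordSpan rfl
  rw [map_add, LinearMap.add_apply, S.mulB_homog _ _ one_mem_homogD hv,
    S.mulB_homog _ _ (gen_mem_homogD i) hv]
  simp [qf_zero_left, wordElem_cons]

lemma mulB_words_gen (i : Fin θ) (v w : List (Fin θ)) :
    S.mulB (wordElem θ v ⊗ₜ wordElem θ w) (gen θ i ⊗ₜ 1 + 1 ⊗ₜ gen θ i) =
      qf q (degW θ w) (δ θ i) • (wordElem θ (v ++ [i]) ⊗ₜ wordElem θ w) +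
        (wordElem θ v ⊗ₜ wordElem θ (w ++ [i])) := by
  have hw : wordElem θ w ∈ homogD θ (degW θ w) := wordElem_mem_wordSpan rfl
  rw [map_add, S.mulB_homog _ _ hw one_mem_homogD, S.mulB_homog _ _ hw (gen_mem_homogD i)]
  simp [qf_zero_right, wordElem_append, wordElem_singleton]

lemma Δ_wordElem_cons (i : Fin θ) (w : List (Fin θ)) :
    S.Δ (wordElem θ (i :: w)) =
      S.mulB (gen θ i ⊗ₜ 1 + 1 ⊗ₜ gen θ i) (S.Δ (wordElem θ w)) := by
  rw [wordElem_cons, S.Δ_mul, S.Δ_gen]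

end BraidedStr

/-- The component of total degree `m` of `T(V) ⊗ T(V)`. -/
def homogTensor (θ m : ℕ) : Submodule ℂ (TV θ ⊗[ℂ] TV θ) :=
  Submodule.span ℂ {X | ∃ u v : List (Fin θ), u.length + v.length = m ∧
    X = wordElem θ u ⊗ₜ wordElem θ v}

lemma map_eq_of_mem_homogTensor {M : Type*} [AddCommMonoid M] [Module ℂ M]
    {f g : TV θ ⊗[ℂ] TV θ →ₗ[ℂ] M} {m : ℕ}
    (h : ∀ u v : List (Fin θ), u.length + v.length = m →
      f (wordElem θ u ⊗ₜ wordElem θ v) = g (wordElem θ u ⊗ₜ wordElem θ v))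
    {X : TV θ ⊗[ℂ] TV θ} (hX : X ∈ homogTensor θ m) : f X = g X := by
  refine LinearMap.eqOn_span ?_ hX
  rintro _ ⟨u, v, huv, rfl⟩
  exact h u v huv

lemma BraidedStr.Δ_mem_homogTensor (S : BraidedStr θ q) {m : ℕ} {x : TV θ}
    (hx : x ∈ homogTot θ m) : S.Δ x ∈ homogTensor θ m := by
  refine map_mem_of_mem_wordSpan (fun w hw => ?_) hx
  subst hw
  clear hx
  induction w with
  | nil =>
    rw [wordElem_nil, S.Δ_one]
    exact Submodule.subset_span ⟨[], [], rfl, rfl⟩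
  | cons i w ih =>
    suffices homogTensor θ w.length ≤ (homogTensor θ (i :: w).length).comap
        (S.mulB (gen θ i ⊗ₜ 1 + 1 ⊗ₜ gen θ i)) from S.Δ_wordElem_cons i w ▸ this ih
    refine Submodule.span_le.2 ?_
    rintro _ ⟨u, v, h, rfl⟩
    rw [SetLike.mem_coe, Submodule.mem_comap, S.mulB_gen_words]
    refine add_mem (Submodule.subset_span ⟨_, _, ?_, rfl⟩)
      (Submodule.smul_mem _ _ (Submodule.subset_span ⟨_, _, ?_, rfl⟩)) <;>
    simp only [List.length_cons] <;> omega

/-- The functional `f ⊗ g` on `T(V) ⊗ T(V)`. -/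
def tensorFun (f g : TV θ →ₗ[ℂ] ℂ) : TV θ ⊗[ℂ] TV θ →ₗ[ℂ] ℂ :=
  LinearMap.mul' ℂ ℂ ∘ₗ TensorProduct.map f g

@[simp] lemma tensorFun_tmul (f g : TV θ →ₗ[ℂ] ℂ) (x y : TV θ) :
    tensorFun f g (x ⊗ₜ y) = f x * g y := by simp [tensorFun]

/-- The counit of `T(V)`. -/
def counit (θ : ℕ) : TV θ →ₗ[ℂ] ℂ := (wordBasis θ).coord []

lemma counit_wordElem (w : List (Fin θ)) : counit θ (wordElem θ w) = if w = [] then 1 else 0 :=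
  coord_wordElem _ _

/-- The coefficient of the generator `x_i`. -/
def genCoeff (i : Fin θ) : TV θ →ₗ[ℂ] ℂ := (wordBasis θ).coord [i]

lemma genCoeff_wordElem (i : Fin θ) (w : List (Fin θ)) :
    genCoeff i (wordElem θ w) = if w = [i] then 1 else 0 :=
  coord_wordElem _ _

lemma counit_one : counit θ 1 = 1 := counit_wordElem []

namespace BraidedStr

variable (S : BraidedStr θ q)

lemma tensorFun_counit_left (f : TV θ →ₗ[ℂ] ℂ) : tensorFun (counit θ) f ∘ₗ S.Δ = f := by
  refine linearMap_ext_words fun w => ?_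
  induction w generalizing f with
  | nil => simp [wordElem_nil, S.Δ_one, counit_one]
  | cons i w ih =>
    have h : tensorFun (counit θ) f ∘ₗ S.mulB (gen θ i ⊗ₜ 1 + 1 ⊗ₜ gen θ i) =
        tensorFun (counit θ) (f ∘ₗ LinearMap.mulLeft ℂ (gen θ i)) := by
      refine tensor_ext_words fun u v => ?_
      rw [LinearMap.comp_apply, S.mulB_gen_words]
      cases u <;> simp [counit_wordElem, degW_nil, qf_zero_right, ← wordElem_cons]
    rw [LinearMap.comp_apply, S.Δ_wordElem_cons, ← LinearMap.comp_apply, h, ← LinearMap.comp_apply,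
      ih, wordElem_cons, LinearMap.comp_apply, LinearMap.mulLeft_apply]

lemma tensorFun_counit_right (f : TV θ →ₗ[ℂ] ℂ) : tensorFun f (counit θ) ∘ₗ S.Δ = f := by
  refine linearMap_ext_words fun w => ?_
  induction w generalizing f with
  | nil => simp [wordElem_nil, S.Δ_one, counit_one]
  | cons i w ih =>
    have h : tensorFun f (counit θ) ∘ₗ S.mulB (gen θ i ⊗ₜ 1 + 1 ⊗ₜ gen θ i) =
        tensorFun (f ∘ₗ LinearMap.mulLeft ℂ (gen θ i)) (counit θ) := by
      refine tensor_ext_words fun u v => ?_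
      rw [LinearMap.comp_apply, S.mulB_gen_words]
      cases v <;> simp [counit_wordElem, ← wordElem_cons]
    rw [LinearMap.comp_apply, S.Δ_wordElem_cons, ← LinearMap.comp_apply, h, ← LinearMap.comp_apply,
      ih, wordElem_cons, LinearMap.comp_apply, LinearMap.mulLeft_apply]

end BraidedStr

variable {I : Submodule ℂ (TV θ)}

lemma tmul_mem_mixedSub_left {a : TV θ} (b : TV θ) (ha : a ∈ I) : a ⊗ₜ[ℂ] b ∈ mixedSub I :=
  Submodule.subset_span (Or.inl ⟨a, b, ha, rfl⟩)

lemma tmul_mem_mixedSub_right (a : TV θ) {b : TV θ} (hb : b ∈ I) : a ⊗ₜ[ℂ] b ∈ mixedSub I :=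
  Submodule.subset_span (Or.inr ⟨a, b, hb, rfl⟩)

lemma mixedSub_le_iff {p : Submodule ℂ (TV θ ⊗[ℂ] TV θ)} :
    mixedSub I ≤ p ↔ ∀ a b, a ∈ I ∨ b ∈ I → a ⊗ₜ b ∈ p := by
  refine ⟨fun h a b hab => h (hab.elim (tmul_mem_mixedSub_left b) (tmul_mem_mixedSub_right a)),
    fun h => Submodule.span_le.2 ?_⟩
  rintro _ (⟨a, b, ha, rfl⟩ | ⟨a, b, hb, rfl⟩)
  · exact h a b (Or.inl ha)
  · exact h a b (Or.inr hb)

lemma tensorFun_eq_zero_of_mem_mixedSub {f g : TV θ →ₗ[ℂ] ℂ}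
    (hf : ∀ x ∈ I, f x = 0) (hg : ∀ x ∈ I, g x = 0) {X : TV θ ⊗[ℂ] TV θ} (hX : X ∈ mixedSub I) :
    tensorFun f g X = 0 := by
  suffices mixedSub I ≤ LinearMap.ker (tensorFun f g) from this hX
  refine mixedSub_le_iff.2 ?_
  rintro a b (h | h)
  · simp [hf a h]
  · simp [hg b h]

lemma mem_of_forall_functional {E : Type*} [AddCommGroup E] [Module ℂ E] {p : Submodule ℂ E}
    {x : E} (h : ∀ f : E →ₗ[ℂ] ℂ, (∀ y ∈ p, f y = 0) → f x = 0) : x ∈ p := by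
  by_contra hx
  obtain ⟨f, hf, hp⟩ := Submodule.exists_le_ker_of_notMem hx
  exact hf (h f fun y hy => hp hy)

lemma ker_map_mkQ_le_mixedSub (I : Submodule ℂ (TV θ)) :
    LinearMap.ker (TensorProduct.map I.mkQ I.mkQ) ≤ mixedSub I := by
  have hex : Function.Exact I.subtype I.mkQ :=
    LinearMap.exact_iff.2 (by rw [Submodule.ker_mkQ, Submodule.range_subtype])
  rw [TensorProduct.map_ker hex I.mkQ_surjective hex I.mkQ_surjective]
  refine sup_le ?_ ?_ <;> rintro _ ⟨X, rfl⟩ <;> induction X using TensorProduct.induction_on with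
  | zero => simp
  | add X Y hX hY => rw [map_add]; exact add_mem hX hY
  | tmul a b => simp [tmul_mem_mixedSub_left, tmul_mem_mixedSub_right]

lemma mem_mixedSub_of_forall_tensorFun {X : TV θ ⊗[ℂ] TV θ}
    (h : ∀ f g : TV θ →ₗ[ℂ] ℂ, (∀ x ∈ I, f x = 0) → (∀ x ∈ I, g x = 0) → tensorFun f g X = 0) :
    X ∈ mixedSub I := by
  refine ker_map_mkQ_le_mixedSub I ?_
  let b := Module.Basis.ofVectorSpace ℂ (TV θ ⧸ I)
  refine (b.tensorProduct b).ext_elem fun ⟨s, t⟩ => ?_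
  have hcoord : (b.tensorProduct b).coord (s, t) ∘ₗ TensorProduct.map I.mkQ I.mkQ =
      tensorFun (b.coord s ∘ₗ I.mkQ) (b.coord t ∘ₗ I.mkQ) :=
    TensorProduct.ext' fun x y => by simp [mul_comm]
  have h0 (s) (x) (hx : x ∈ I) : (b.coord s ∘ₗ I.mkQ) x = 0 := by
    rw [LinearMap.comp_apply, Submodule.mkQ_apply, (Submodule.Quotient.mk_eq_zero I).2 hx, map_zero]
  have := LinearMap.congr_fun hcoord X
  rw [h _ _ (h0 s) (h0 t)] at this
  simpa using this

end Coproduct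

/-! ### A coideal is stable under the diagonal action, so `I ⊗ T(V) + T(V) ⊗ I` is an ideal -/

namespace IsPreNicholsIdeal

variable {θ : ℕ} {q : Fin θ → Fin θ → ℂˣ} {S : BraidedStr θ q} {I : Submodule ℂ (TV θ)}

lemma coord_eq_zero (hI : IsPreNicholsIdeal S I) {x : TV θ} (hx : x ∈ I) {v : List (Fin θ)}
    (hv : v.length < 2) : (wordBasis θ).coord v x = 0 := by
  suffices I ≤ LinearMap.ker ((wordBasis θ).coord v) from this hx
  rw [hI.homog_ge2]
  refine Submodule.span_le.2 ?_
  rintro y ⟨-, n, hn, hy⟩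
  refine map_eq_of_mem_wordSpan (g := 0) (fun w hw => ?_) hy
  rw [coord_wordElem, if_neg (by rintro rfl; omega), LinearMap.zero_apply]

-- Apply `x_i^* ⊗ f` to `Δ (x * x_i)`, for a functional `f` vanishing on `I`.
lemma actR_delta_mem (hI : IsPreNicholsIdeal S I) (i : Fin θ) {x : TV θ} (hx : x ∈ I) :
    actR q (δ θ i) x ∈ I := by
  refine mem_of_forall_functional fun f hf => ?_
  have he : ∀ y ∈ I, genCoeff i y = 0 := fun y hy => hI.coord_eq_zero hy Nat.one_lt_two
  have hmul : tensorFun (genCoeff i) f ∘ₗ S.mulB.flip (gen θ i ⊗ₜ 1 + 1 ⊗ₜ gen θ i) =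
      tensorFun (counit θ) (f ∘ₗ actR q (δ θ i)) +
        tensorFun (genCoeff i) (f ∘ₗ LinearMap.mulRight ℂ (gen θ i)) := by
    refine tensor_ext_words fun u v => ?_
    rw [LinearMap.comp_apply, LinearMap.flip_apply, S.mulB_words_gen]
    simp [genCoeff_wordElem, counit_wordElem, actR_wordElem, ← wordElem_singleton,
      ← wordElem_append]
  have h0 := tensorFun_eq_zero_of_mem_mixedSub he hf (hI.coideal _ (hI.mul_right (gen θ i) x hx))
  have h1 : tensorFun (genCoeff i) (f ∘ₗ LinearMap.mulRight ℂ (gen θ i)) (S.Δ x) = 0 :=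
    tensorFun_eq_zero_of_mem_mixedSub (g := f ∘ₗ LinearMap.mulRight ℂ (gen θ i)) he
      (fun y hy => hf (y * gen θ i) (hI.mul_right _ y hy)) (hI.coideal _ hx)
  rw [S.Δ_mul, S.Δ_gen, ← LinearMap.flip_apply, ← LinearMap.comp_apply, hmul, LinearMap.add_apply,
    h1, add_zero, ← LinearMap.comp_apply, S.tensorFun_counit_left] at h0
  exact h0

lemma actL_delta_mem (hI : IsPreNicholsIdeal S I) (i : Fin θ) {x : TV θ} (hx : x ∈ I) :
    actL q (δ θ i) x ∈ I := by
  refine mem_of_forall_functional fun f hf => ?_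
  have he : ∀ y ∈ I, genCoeff i y = 0 := fun y hy => hI.coord_eq_zero hy Nat.one_lt_two
  have hmul : tensorFun f (genCoeff i) ∘ₗ S.mulB (gen θ i ⊗ₜ 1 + 1 ⊗ₜ gen θ i) =
      tensorFun (f ∘ₗ LinearMap.mulLeft ℂ (gen θ i)) (genCoeff i) +
        tensorFun (f ∘ₗ actL q (δ θ i)) (counit θ) := by
    refine tensor_ext_words fun u v => ?_
    rw [LinearMap.comp_apply, S.mulB_gen_words]
    simp [genCoeff_wordElem, counit_wordElem, actL_wordElem, ← wordElem_cons]
  have h0 := tensorFun_eq_zero_of_mem_mixedSub hf he (hI.coideal _ (hI.mul_left (gen θ i) x hx))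
  have h1 : tensorFun (f ∘ₗ LinearMap.mulLeft ℂ (gen θ i)) (genCoeff i) (S.Δ x) = 0 :=
    tensorFun_eq_zero_of_mem_mixedSub (f := f ∘ₗ LinearMap.mulLeft ℂ (gen θ i))
      (fun y hy => hf (gen θ i * y) (hI.mul_left _ y hy)) he (hI.coideal _ hx)
  rw [S.Δ_mul, S.Δ_gen, ← LinearMap.comp_apply, hmul, LinearMap.add_apply, h1, zero_add,
    ← LinearMap.comp_apply, S.tensorFun_counit_right] at h0
  exact h0

lemma actL_degW_mem (hI : IsPreNicholsIdeal S I) (w : List (Fin θ)) {x : TV θ} (hx : x ∈ I) :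
    actL q (degW θ w) x ∈ I := by
  induction w with
  | nil => rwa [degW_nil, actL_zero]
  | cons i w ih => rw [degW_cons, actL_add]; exact hI.actL_delta_mem i ih

lemma actR_degW_mem (hI : IsPreNicholsIdeal S I) (w : List (Fin θ)) {x : TV θ} (hx : x ∈ I) :
    actR q (degW θ w) x ∈ I := by
  induction w with
  | nil => rwa [degW_nil, actR_zero]
  | cons i w ih => rw [degW_cons, actR_add]; exact hI.actR_delta_mem i ih

lemma mulB_mem_left (hI : IsPreNicholsIdeal S I) {X : TV θ ⊗[ℂ] TV θ} (Y : TV θ ⊗[ℂ] TV θ)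
    (hX : X ∈ mixedSub I) : S.mulB X Y ∈ mixedSub I := by
  induction Y using TensorProduct.induction_on with
  | zero => simp
  | add Y Z hY hZ => rw [map_add]; exact add_mem hY hZ
  | tmul c d =>
    suffices mixedSub I ≤ (mixedSub I).comap (S.mulB.flip (c ⊗ₜ d)) from this hX
    refine mixedSub_le_iff.2 fun a b h => ?_
    refine map_mem_of_words (f := S.mulB (a ⊗ₜ b) ∘ₗ (TensorProduct.mk ℂ (TV θ) (TV θ)).flip d)
      (p := mixedSub I) (fun w => ?_) c
    rw [LinearMap.comp_apply, LinearMap.flip_apply, TensorProduct.mk_apply, S.mulB_wordElem_right]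
    rcases h with h | h
    · exact tmul_mem_mixedSub_left _ (hI.mul_right _ _ h)
    · exact tmul_mem_mixedSub_right _ (hI.mul_right _ _ (hI.actR_degW_mem w h))

lemma mulB_mem_right (hI : IsPreNicholsIdeal S I) (X : TV θ ⊗[ℂ] TV θ) {Y : TV θ ⊗[ℂ] TV θ}
    (hY : Y ∈ mixedSub I) : S.mulB X Y ∈ mixedSub I := by
  induction X using TensorProduct.induction_on with
  | zero => simp
  | add X Z hX hZ => rw [map_add, LinearMap.add_apply]; exact add_mem hX hZ
  | tmul a b =>
    suffices mixedSub I ≤ (mixedSub I).comap (S.mulB (a ⊗ₜ b)) from this hY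
    refine mixedSub_le_iff.2 fun c d h => ?_
    refine map_mem_of_words (f := S.mulB.flip (c ⊗ₜ d) ∘ₗ TensorProduct.mk ℂ (TV θ) (TV θ) a)
      (p := mixedSub I) (fun w => ?_) b
    rw [LinearMap.comp_apply, LinearMap.flip_apply, TensorProduct.mk_apply, S.mulB_wordElem_left]
    rcases h with h | h
    · exact tmul_mem_mixedSub_left _ (hI.mul_left _ _ (hI.actL_degW_mem w h))
    · exact tmul_mem_mixedSub_right _ (hI.mul_left _ _ h)

end IsPreNicholsIdeal

/-! ### Braided subspaces of primitive elements -/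

section Subspace

variable {θ n : ℕ} {q : Fin θ → Fin θ → ℂˣ}

/-- The braiding matrix of a family of homogeneous elements of degrees `dg`. -/
def subMat (q : Fin θ → Fin θ → ℂˣ) (dg : Fin n → Fin θ → ℕ) : Fin n → Fin n → ℂˣ :=
  fun a b => Units.mk0 (qf q (dg a) (dg b)) (qf_ne_zero _ _)

lemma qf_subMat_delta_degW (dg : Fin n → Fin θ → ℕ) (a : Fin n) (w : List (Fin n)) :
    qf (subMat q dg) (δ n a) (degW n w) = qf q (dg a) (w.map dg).sum := by
  induction w with
  | nil => simp [degW_nil, qf_zero_right]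
  | cons b w ih => simp [degW_cons, qf_add_right, ih, qf_delta, subMat]

/-- The algebra map `T(W) → T(V)` sending `x_a` to `y_a`. -/
def subHom (y : Fin n → TV θ) : TV n →ₐ[ℂ] TV θ := FreeAlgebra.lift ℂ y

/-- The map induced by `subHom y` on `T(W) ⊗ T(W)`. -/
def subHomTensor (y : Fin n → TV θ) : TV n ⊗[ℂ] TV n →ₗ[ℂ] TV θ ⊗[ℂ] TV θ :=
  TensorProduct.map (subHom y).toLinearMap (subHom y).toLinearMap

@[simp] lemma subHom_gen (y : Fin n → TV θ) (a : Fin n) : subHom y (gen n a) = y a :=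
  FreeAlgebra.lift_ι_apply y a

@[simp] lemma subHomTensor_tmul (y : Fin n → TV θ) (u v : TV n) :
    subHomTensor y (u ⊗ₜ v) = subHom y u ⊗ₜ subHom y v := rfl

/-- `y` is primitive modulo `I`. -/
def PrimitiveMod (S : BraidedStr θ q) (I : Submodule ℂ (TV θ)) (y : TV θ) : Prop :=
  S.Δ y - (y ⊗ₜ[ℂ] (1 : TV θ) + (1 : TV θ) ⊗ₜ[ℂ] y) ∈ mixedSub I

variable {S : BraidedStr θ q} {I : Submodule ℂ (TV θ)} {dg : Fin n → Fin θ → ℕ}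
  {y : Fin n → TV θ}

lemma subHom_wordElem_mem_homogD (hy : ∀ a, y a ∈ homogD θ (dg a)) (w : List (Fin n)) :
    subHom y (wordElem n w) ∈ homogD θ (w.map dg).sum := by
  induction w with
  | nil => simpa [wordElem_nil] using one_mem_homogD
  | cons b w ih => simpa [wordElem_cons] using mul_mem_homogD (hy b) ih

lemma subHom_wordElem_mem_Wfil {D : ℕ} (hy : ∀ a, y a ∈ Wfil θ D) (w : List (Fin n)) :
    subHom y (wordElem n w) ∈ Wfil θ (D * w.length) := by
  induction w with
  | nil =>
    rw [wordElem_nil, map_one]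
    exact wordElem_mem_wordSpan (w := []) (Nat.zero_le _)
  | cons a w ih =>
    rw [wordElem_cons, map_mul, subHom_gen, List.length_cons, mul_add, mul_one, add_comm]
    exact mul_mem_Wfil (hy a) ih

lemma subHomTensor_mulB (S' : BraidedStr n (subMat q dg)) (hy : ∀ a, y a ∈ homogD θ (dg a))
    (a : Fin n) (X : TV n ⊗[ℂ] TV n) :
    subHomTensor y (S'.mulB (gen n a ⊗ₜ 1 + 1 ⊗ₜ gen n a) X) =
      S.mulB (y a ⊗ₜ 1 + 1 ⊗ₜ y a) (subHomTensor y X) := by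
  have h : subHomTensor y ∘ₗ S'.mulB (gen n a ⊗ₜ 1 + 1 ⊗ₜ gen n a) =
      S.mulB (y a ⊗ₜ 1 + 1 ⊗ₜ y a) ∘ₗ subHomTensor y := by
    refine tensor_ext_words fun u v => ?_
    rw [LinearMap.comp_apply, S'.mulB_gen_words, LinearMap.comp_apply, subHomTensor_tmul, map_add,
      map_add, map_smul, LinearMap.add_apply,
      S.mulB_homog _ _ one_mem_homogD (subHom_wordElem_mem_homogD hy u),
      S.mulB_homog _ _ (hy a) (subHom_wordElem_mem_homogD hy u), qf_zero_left,
      qf_subMat_delta_degW]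
    simp [wordElem_cons]
  exact LinearMap.congr_fun h X

lemma Δ_subHom_sub_mem (hI : IsPreNicholsIdeal S I) (S' : BraidedStr n (subMat q dg))
    (hy : ∀ a, y a ∈ homogD θ (dg a)) (hp : ∀ a, PrimitiveMod S I (y a)) (x : TV n) :
    S.Δ (subHom y x) - subHomTensor y (S'.Δ x) ∈ mixedSub I := by
  refine map_mem_of_words (f := S.Δ ∘ₗ (subHom y).toLinearMap - subHomTensor y ∘ₗ S'.Δ)
    (fun w => ?_) x
  simp only [LinearMap.sub_apply, LinearMap.comp_apply, AlgHom.toLinearMap_apply]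
  induction w with
  | nil => simp [wordElem_nil, S.Δ_one, S'.Δ_one]
  | cons a w ih =>
    have e (A B C D : TV θ ⊗[ℂ] TV θ) :
        S.mulB A C - S.mulB B D = S.mulB (A - B) C + S.mulB B (C - D) := by
      simp only [map_sub, LinearMap.sub_apply]
      abel
    rw [S'.Δ_wordElem_cons, subHomTensor_mulB (S := S) S' hy, wordElem_cons, map_mul, S.Δ_mul,
      subHom_gen, e]
    exact add_mem (hI.mulB_mem_left _ (hp a)) (hI.mulB_mem_right _ ih)

/-- The ideal of leading terms of the kernel of `T(W) → T(V)/I`. The kernel itself need not be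
homogeneous for the standard grading of `T(W)`. -/
def leadIdeal (I : Submodule ℂ (TV θ)) (y : Fin n → TV θ) : Submodule ℂ (TV n) :=
  Submodule.span ℂ {x | ∃ m, x ∈ homogTot n m ∧ ∃ z ∈ lowerWords n m, subHom y (x + z) ∈ I}

lemma lenProj_mem_leadIdeal {r : ℕ} {x : TV n} (hx : x ∈ Wfil n r) (h : subHom y x ∈ I) :
    lenProj n r x ∈ leadIdeal I y :=
  Submodule.subset_span ⟨r, lenProj_mem_homogTot r x, _, sub_lenProj_mem_lowerWords hx, by simpa⟩

lemma exists_functional_of_leadIdeal (r : ℕ) {f : TV n →ₗ[ℂ] ℂ}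
    (hf : ∀ x ∈ leadIdeal I y, f x = 0) :
    ∃ F : TV θ →ₗ[ℂ] ℂ, (∀ x ∈ I, F x = 0) ∧
      ∀ x ∈ Wfil n r, F (subHom y x) = f (lenProj n r x) := by
  let ψ : Wfil n r →ₗ[ℂ] TV θ ⧸ I := I.mkQ ∘ₗ (subHom y).toLinearMap ∘ₗ (Wfil n r).subtype
  let g : Module.Dual ℂ (Wfil n r) := f ∘ₗ lenProj n r ∘ₗ (Wfil n r).subtype
  have hg : g ∈ (LinearMap.ker ψ).dualAnnihilator := by
    rw [Submodule.mem_dualAnnihilator]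
    rintro ⟨x, hx⟩ h
    exact hf _ (lenProj_mem_leadIdeal hx ((Submodule.Quotient.mk_eq_zero I).1 h))
  rw [← LinearMap.range_dualMap_eq_dualAnnihilator_ker] at hg
  obtain ⟨F, hF⟩ := hg
  refine ⟨F ∘ₗ I.mkQ, fun x hx => ?_, fun x hx => LinearMap.congr_fun hF ⟨x, hx⟩⟩
  rw [LinearMap.comp_apply, Submodule.mkQ_apply, (Submodule.Quotient.mk_eq_zero I).2 hx, map_zero]

lemma tensorFun_eq_sum_lenProj (f g : TV n →ₗ[ℂ] ℂ) {m : ℕ} {X : TV n ⊗[ℂ] TV n}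
    (hX : X ∈ homogTensor n m) :
    tensorFun f g X =
      ∑ r ∈ Finset.range (m + 1), tensorFun (f ∘ₗ lenProj n r) (g ∘ₗ lenProj n (m - r)) X := by
  rw [← LinearMap.sum_apply]
  refine map_eq_of_mem_homogTensor (fun u v huv => ?_) hX
  have hv : v.length = m - u.length := by omega
  rw [LinearMap.sum_apply, Finset.sum_eq_single_of_mem u.length (Finset.mem_range.2 (by omega))]
  · simp [lenProj_wordElem, hv]
  · intro r _ hr
    simp [lenProj_wordElem, hr.symm]

lemma tensorFun_comp_subHom_Δ_eq_zero (hI : IsPreNicholsIdeal S I)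
    (S' : BraidedStr n (subMat q dg)) (hy : ∀ a, y a ∈ homogD θ (dg a))
    (hp : ∀ a, PrimitiveMod S I (y a)) {F G : TV θ →ₗ[ℂ] ℂ} (hF : ∀ x ∈ I, F x = 0)
    (hG : ∀ x ∈ I, G x = 0) {u : TV n} (hu : subHom y u ∈ I) :
    tensorFun (F ∘ₗ (subHom y).toLinearMap) (G ∘ₗ (subHom y).toLinearMap) (S'.Δ u) = 0 := by
  have h : tensorFun (F ∘ₗ (subHom y).toLinearMap) (G ∘ₗ (subHom y).toLinearMap) =
      tensorFun F G ∘ₗ subHomTensor y := tensor_ext_words fun u v => by simp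
  have h0 := tensorFun_eq_zero_of_mem_mixedSub hF hG (Δ_subHom_sub_mem hI S' hy hp u)
  rwa [map_sub, tensorFun_eq_zero_of_mem_mixedSub hF hG (hI.coideal _ hu), zero_sub, neg_eq_zero,
    ← LinearMap.comp_apply, ← h] at h0

lemma tensorFun_eq_lenProj_of_mem_homogTensor {f g F G : TV n →ₗ[ℂ] ℂ} {r s : ℕ}
    (hF : ∀ x ∈ Wfil n r, F x = f (lenProj n r x))
    (hG : ∀ x ∈ Wfil n s, G x = g (lenProj n s x)) {m : ℕ} (hm : m ≤ r + s)
    {X : TV n ⊗[ℂ] TV n} (hX : X ∈ homogTensor n m) :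
    tensorFun F G X = tensorFun (f ∘ₗ lenProj n r) (g ∘ₗ lenProj n s) X := by
  refine map_eq_of_mem_homogTensor (fun u v huv => ?_) hX
  have hFu (h : u.length ≤ r) := hF _ (wordElem_mem_wordSpan h)
  have hGv (h : v.length ≤ s) := hG _ (wordElem_mem_wordSpan h)
  simp only [tensorFun_tmul, LinearMap.comp_apply]
  rcases lt_or_ge r u.length with hu | hu
  · rw [hGv (by omega), lenProj_wordElem s, if_neg (by omega), map_zero, mul_zero, mul_zero]
  rcases lt_or_ge s v.length with hv | hv
  · rw [hFu (by omega), lenProj_wordElem r, if_neg (by omega), map_zero, zero_mul, zero_mul]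
  · rw [hFu hu, hGv hv]

lemma tensorFun_Δ_eq_zero_of_mem_lowerWords {f g F G : TV n →ₗ[ℂ] ℂ} {r s : ℕ}
    (hF : ∀ x ∈ Wfil n r, F x = f (lenProj n r x))
    (hG : ∀ x ∈ Wfil n s, G x = g (lenProj n s x)) {q' : Fin n → Fin n → ℂˣ}
    (S' : BraidedStr n q') {z : TV n} (hz : z ∈ lowerWords n (r + s)) :
    tensorFun F G (S'.Δ z) = 0 := by
  refine map_eq_of_mem_wordSpan (f := tensorFun F G ∘ₗ S'.Δ) (g := 0) (fun w hw => ?_) hz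
  have hΔ := S'.Δ_mem_homogTensor (wordElem_mem_wordSpan (P := fun v => v.length = w.length) rfl)
  rw [LinearMap.comp_apply, tensorFun_eq_lenProj_of_mem_homogTensor hF hG hw.le hΔ]
  refine map_eq_of_mem_homogTensor (g := 0) (fun u v huv => ?_) hΔ
  rcases eq_or_ne u.length r with hu | hu
  · simp [lenProj_wordElem, show v.length ≠ s by omega]
  · simp [lenProj_wordElem, hu]

lemma leadIdeal_coideal (hI : IsPreNicholsIdeal S I) (S' : BraidedStr n (subMat q dg))
    (hy : ∀ a, y a ∈ homogD θ (dg a)) (hp : ∀ a, PrimitiveMod S I (y a)) :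
    leadIdeal I y ≤ (mixedSub (leadIdeal I y)).comap S'.Δ := by
  refine Submodule.span_le.2 ?_
  rintro x ⟨m, hxm, z, hz, hxz⟩
  refine mem_mixedSub_of_forall_tensorFun fun f g hf hg => ?_
  have hΔ := S'.Δ_mem_homogTensor hxm
  rw [tensorFun_eq_sum_lenProj f g hΔ]
  refine Finset.sum_eq_zero fun r hr => ?_
  obtain ⟨s, rfl⟩ := Nat.exists_eq_add_of_le (Nat.lt_succ_iff.1 (Finset.mem_range.1 hr))
  obtain ⟨F, hF0, hF⟩ := exists_functional_of_leadIdeal r hf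
  obtain ⟨G, hG0, hG⟩ := exists_functional_of_leadIdeal s hg
  have h := tensorFun_comp_subHom_Δ_eq_zero hI S' hy hp hF0 hG0 hxz
  rwa [map_add, map_add, tensorFun_Δ_eq_zero_of_mem_lowerWords hF hG S' hz, add_zero,
    tensorFun_eq_lenProj_of_mem_homogTensor hF hG le_rfl hΔ, ← Nat.add_sub_cancel_left (n := r)
    (m := s)] at h

lemma mul_mem_leadIdeal_left (hI : IsPreNicholsIdeal S I) (a : TV n) {x : TV n}
    (hx : x ∈ leadIdeal I y) : a * x ∈ leadIdeal I y := by
  refine map_mem_of_words (f := LinearMap.mulRight ℂ x) (fun w => ?_) a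
  suffices leadIdeal I y ≤ (leadIdeal I y).comap (LinearMap.mulLeft ℂ (wordElem n w)) from
    this hx
  refine Submodule.span_le.2 ?_
  rintro x ⟨m, hxm, z, hz, hxz⟩
  have hw : wordElem n w ∈ wordSpan fun v => v.length = w.length := wordElem_mem_wordSpan rfl
  refine Submodule.subset_span ⟨w.length + m,
    mul_mem_wordSpan (fun u v hu hv => by simp [hu, hv]) hw hxm, wordElem n w * z,
    mul_mem_wordSpan (fun u v hu hv => by simp [hu, hv]) hw hz, ?_⟩
  rw [LinearMap.mulLeft_apply, ← mul_add, map_mul]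
  exact hI.mul_left _ _ hxz

lemma mul_mem_leadIdeal_right (hI : IsPreNicholsIdeal S I) (a : TV n) {x : TV n}
    (hx : x ∈ leadIdeal I y) : x * a ∈ leadIdeal I y := by
  refine map_mem_of_words (f := LinearMap.mulLeft ℂ x) (fun w => ?_) a
  suffices leadIdeal I y ≤ (leadIdeal I y).comap (LinearMap.mulRight ℂ (wordElem n w)) from
    this hx
  refine Submodule.span_le.2 ?_
  rintro x ⟨m, hxm, z, hz, hxz⟩
  have hw : wordElem n w ∈ wordSpan fun v => v.length = w.length := wordElem_mem_wordSpan rfl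
  refine Submodule.subset_span ⟨m + w.length,
    mul_mem_wordSpan (fun u v hu hv => by simp [hu, hv]) hxm hw, z * wordElem n w,
    mul_mem_wordSpan (fun u v hu hv => by simp [hu, hv]) hz hw, ?_⟩
  rw [LinearMap.mulRight_apply, ← add_mul, map_mul]
  exact hI.mul_right _ _ hxz

lemma leadIdeal_isPreNicholsIdeal (hI : IsPreNicholsIdeal S I) (S' : BraidedStr n (subMat q dg))
    (hy : ∀ a, y a ∈ homogD θ (dg a)) (hp : ∀ a, PrimitiveMod S I (y a))
    (hind : ∀ u ∈ Wfil n 1, subHom y u ∈ I → u = 0) :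
    IsPreNicholsIdeal S' (leadIdeal I y) where
  mul_left a _ hx := mul_mem_leadIdeal_left hI a hx
  mul_right a _ hx := mul_mem_leadIdeal_right hI a hx
  homog_ge2 := by
    refine le_antisymm (Submodule.span_le.2 ?_) (Submodule.span_le.2 fun x hx => hx.1)
    rintro x ⟨m, hxm, z, hz, hxz⟩
    have hx : x ∈ leadIdeal I y := Submodule.subset_span ⟨m, hxm, z, hz, hxz⟩
    rcases lt_or_ge m 2 with h | h
    · have hsum : x + z = 0 := hind _ (add_mem (wordSpan_mono (fun w hw => by omega) hxm)
        (wordSpan_mono (fun w hw => by omega) hz)) hxz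
      have hx0 : x = 0 := by
        have h0 := congrArg (lenProj n m) hsum
        rwa [map_add, lenProj_of_mem_homogTot hxm, lenProj_of_mem_lowerWords hz, add_zero,
          map_zero] at h0
      exact hx0 ▸ zero_mem _
    · exact Submodule.subset_span ⟨hx, m, h, hxm⟩
  coideal _ hx := leadIdeal_coideal hI S' hy hp hx

instance finite_Wfil (r : ℕ) : Module.Finite ℂ (Wfil θ r) := by
  have : {x | ∃ w : List (Fin θ), w.length ≤ r ∧ x = wordElem θ w}.Finite :=
    ((List.finite_length_le (Fin θ) r).image (wordElem θ)).subset
      fun _ ⟨w, hw, h⟩ => ⟨w, hw, h.symm⟩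
  exact FiniteDimensional.span_of_finite ℂ this

-- The longest words with nonzero coefficient in a relation modulo `I` form a relation modulo `J`.
lemma linearIndependent_subHom {J : Submodule ℂ (TV n)} (hJ : leadIdeal I y ≤ J)
    {κ : Type*} (a : κ → List (Fin n))
    (h : LinearIndependent ℂ fun k => J.mkQ (wordElem n (a k))) :
    LinearIndependent ℂ fun k => I.mkQ (subHom y (wordElem n (a k))) := by
  classical
  rw [linearIndependent_iff'] at h ⊢
  intro s c hc
  by_contra! hne
  obtain ⟨k₀, hk₀, hck₀⟩ := hne
  obtain ⟨k, hk, hmax⟩ := Finset.exists_max_image (s.filter (c · ≠ 0)) (fun k => (a k).length)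
    ⟨k₀, Finset.mem_filter.2 ⟨hk₀, hck₀⟩⟩
  obtain ⟨hks, hck⟩ := Finset.mem_filter.1 hk
  have hx : ∑ j ∈ s, c j • wordElem n (a j) ∈ Wfil n (a k).length := by
    refine Submodule.sum_mem _ fun j hj => ?_
    rcases eq_or_ne (c j) 0 with h0 | h0
    · simp [h0]
    · exact Submodule.smul_mem _ _
        (wordElem_mem_wordSpan (hmax j (Finset.mem_filter.2 ⟨hj, h0⟩)))
  have hxI : subHom y (∑ j ∈ s, c j • wordElem n (a j)) ∈ I := by
    rw [← Submodule.Quotient.mk_eq_zero, ← Submodule.mkQ_apply, ← hc]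
    simp
  have hlead := hJ (lenProj_mem_leadIdeal hx hxI)
  rw [← Submodule.Quotient.mk_eq_zero, ← Submodule.mkQ_apply, map_sum, map_sum] at hlead
  refine hck (h (s.filter fun j => (a j).length = (a k).length) c ?_ k
    (Finset.mem_filter.2 ⟨hks, rfl⟩))
  rw [Finset.sum_filter]
  refine Eq.trans ?_ hlead
  refine Finset.sum_congr rfl fun j _ => ?_
  rw [map_smul, lenProj_wordElem, map_smul]
  split_ifs <;> simp

lemma map_mkQ_Wfil (J : Submodule ℂ (TV n)) (N : ℕ) :
    (Wfil n N).map J.mkQ = Submodule.span ℂ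
      (Set.range fun w : {w : List (Fin n) // w.length ≤ N} => J.mkQ (wordElem n w)) := by
  rw [Wfil, Submodule.map_span]
  congr 1
  ext x
  constructor
  · rintro ⟨_, ⟨w, hw, rfl⟩, rfl⟩
    exact ⟨⟨w, hw⟩, rfl⟩
  · rintro ⟨⟨w, hw⟩, rfl⟩
    exact ⟨_, ⟨w, hw, rfl⟩, rfl⟩

lemma finrank_map_Wfil_le {J : Submodule ℂ (TV n)} (hJ : leadIdeal I y ≤ J) {D : ℕ}
    (hy : ∀ a, y a ∈ Wfil θ D) (N : ℕ) :
    Module.finrank ℂ ((Wfil n N).map J.mkQ) ≤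
      Module.finrank ℂ ((Wfil θ (D * N)).map I.mkQ) := by
  obtain ⟨κ, a, ha, hspan, hli⟩ := exists_linearIndependent' ℂ
    fun w : {w : List (Fin n) // w.length ≤ N} => J.mkQ (wordElem n w)
  have : Finite {w : List (Fin n) // w.length ≤ N} := List.finite_length_le (Fin n) N
  have : Finite κ := Finite.of_injective a ha
  have := Fintype.ofFinite κ
  rw [map_mkQ_Wfil, ← hspan, finrank_span_eq_card hli]
  let M := (Wfil θ (D * N)).map I.mkQ
  have hM (k) : I.mkQ (subHom y (wordElem n (a k).1)) ∈ M := Submodule.mem_map_of_mem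
    (Wfil_mono (Nat.mul_le_mul_left D (a k).2) (subHom_wordElem_mem_Wfil hy _))
  have hliM : LinearIndependent ℂ fun k =>
      (⟨I.mkQ (subHom y (wordElem n (a k).1)), hM k⟩ : M) :=
    LinearIndependent.of_comp M.subtype (linearIndependent_subHom hJ (fun k => (a k).1) hli)
  exact hliM.fintype_card_le_finrank

lemma FinGK.of_leadIdeal_le (hGK : FinGK I) {J : Submodule ℂ (TV n)} (hJ : leadIdeal I y ≤ J)
    {D : ℕ} (hy : ∀ a, y a ∈ Wfil θ D) : FinGK J := by
  obtain ⟨C, d, hC⟩ := hGK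
  refine ⟨C * (D + 1) ^ d, d, fun N => ?_⟩
  calc Module.finrank ℂ ((Wfil n N).map J.mkQ)
    _ ≤ Module.finrank ℂ ((Wfil θ (D * N)).map I.mkQ) := finrank_map_Wfil_le hJ hy N
    _ ≤ C * (D * N + 1) ^ d := hC _
    _ ≤ C * ((D + 1) * (N + 1)) ^ d := by gcongr; nlinarith
    _ = C * (D + 1) ^ d * (N + 1) ^ d := by rw [mul_pow, mul_assoc]

theorem finiteRootSystem_subMat (hAAH : AAH) (hI : IsPreNicholsIdeal S I) (hGK : FinGK I)
    (hy : ∀ a, y a ∈ homogD θ (dg a)) (hp : ∀ a, PrimitiveMod S I (y a))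
    (hind : ∀ u ∈ Wfil n 1, subHom y u ∈ I → u = 0) :
    FiniteRootSystem (subMat q dg) := by
  let S' := braidedStr (subMat q dg)
  refine hAAH n _ S' (hGK.of_leadIdeal_le (D := ∑ a, ∑ t, dg a t)
    (le_sSup (leadIdeal_isPreNicholsIdeal hI S' hy hp hind)) fun a => ?_)
  exact Wfil_mono (Finset.single_le_sum (f := fun a => ∑ t, dg a t) (fun _ _ => Nat.zero_le _)
    (Finset.mem_univ a)) (homogTot_le_Wfil _ (homogD_le_homogTot _ (hy a)))

end Subspace

/-! ### Reflections and orbits of the Weyl groupoid -/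

section RootSystem

variable {n : ℕ} {q : Fin n → Fin n → ℂˣ}

lemma cij_self (i : Fin n) : cij q i i = 2 := if_pos rfl

/-- The `i`-th row of the generalized Cartan matrix, as a linear form. -/
def cartanRow (q : Fin n → Fin n → ℂˣ) (i : Fin n) : (Fin n → ℤ) →ₗ[ℤ] ℤ :=
  Fintype.linearCombination ℤ (cij q i)

lemma cartanRow_apply (i : Fin n) (v : Fin n → ℤ) : cartanRow q i v = ∑ j, cij q i j * v j := by
  simp [cartanRow, Fintype.linearCombination_apply, mul_comm]

lemma cartanRow_single_self (i : Fin n) : cartanRow q i (Pi.single i 1) = 2 := by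
  simp [cartanRow_apply, Pi.single_apply, cij_self]

/-- The reflection `sRefl q i` as a linear map. -/
def sReflHom (q : Fin n → Fin n → ℂˣ) (i : Fin n) : (Fin n → ℤ) →ₗ[ℤ] (Fin n → ℤ) :=
  Module.preReflection (Pi.single i 1) (cartanRow q i)

lemma sReflHom_eq_sRefl (i : Fin n) (v : Fin n → ℤ) : sReflHom q i v = sRefl q i v := by
  ext k
  simp [sReflHom, Module.preReflection_apply, sRefl, cartanRow_apply, Pi.single_apply]

lemma sReflHom_sReflHom (i : Fin n) (v : Fin n → ℤ) : sReflHom q i (sReflHom q i v) = v :=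
  Module.involutive_preReflection (cartanRow_single_self i) v

lemma sReflHom_apply_self (i : Fin n) (v : Fin n → ℤ) :
    sReflHom q i v i = v i - ∑ j, cij q i j * v j := by
  simp [sReflHom, Module.preReflection_apply, cartanRow_apply]

lemma sReflHom_apply_of_ne {i k : Fin n} (h : k ≠ i) (v : Fin n → ℤ) :
    sReflHom q i v k = v k := by
  simp [sReflHom, Module.preReflection_apply, h]

/-- The braiding matrix obtained by successive reflections at the vertices of a path. -/
def reflectMatPath : List (Fin n) → (Fin n → Fin n → ℂˣ) → Fin n → Fin n → ℂˣ
  | [], q => q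
  | i :: w, q => reflectMatPath w (reflectMat q i)

/-- The composition of the reflections of `ℤ^n` along a path. -/
def sReflPath : List (Fin n) → (Fin n → Fin n → ℂˣ) → (Fin n → ℤ) →ₗ[ℤ] (Fin n → ℤ)
  | [], _ => LinearMap.id
  | i :: w, q => sReflPath w (reflectMat q i) ∘ₗ sReflHom q i

lemma sReflPath_cons (i : Fin n) (w : List (Fin n)) (v : Fin n → ℤ) :
    sReflPath (i :: w) q v = sReflPath w (reflectMat q i) (sReflHom q i v) := rfl

lemma sReflPath_append (w w' : List (Fin n)) (v : Fin n → ℤ) :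
    sReflPath (w ++ w') q v = sReflPath w' (reflectMatPath w q) (sReflPath w q v) := by
  induction w generalizing q v with
  | nil => rfl
  | cons i _ ih => exact ih _

/-- All reflections are defined along every path starting at `q`, and every vector has a finite
orbit under the Weyl groupoid. -/
structure HasFiniteOrbits (q : Fin n → Fin n → ℂˣ) : Prop where
  reflectable (w : List (Fin n)) (i : Fin n) : reflectable (reflectMatPath w q) i
  finite_orbit (v : Fin n → ℤ) : (Set.range fun w => sReflPath w q v).Finite

lemma ReachRoot.sReflPath {q₀ : Fin n → Fin n → ℂˣ} {β : Fin n → ℤ} (h : ReachRoot q₀ q β)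
    (w : List (Fin n)) : ReachRoot q₀ (reflectMatPath w q) (sReflPath w q β) := by
  induction w generalizing q β with
  | nil => exact h
  | cons i _ ih => exact ih (sReflHom_eq_sRefl (q := q) i β ▸ h.reflect i)

lemma reachRoot_single (j : Fin n) : ReachRoot q q (Pi.single j 1) := by
  have h := ReachRoot.simple (q₀ := q) j
  rwa [show (fun k => if k = j then (1 : ℤ) else 0) = Pi.single j 1 from
    funext fun k => (Pi.single_apply j 1 k).symm] at h

lemma FiniteRootSystem.hasFiniteOrbits (h : FiniteRootSystem q) : HasFiniteOrbits q where
  reflectable w i := h.1 _ i ⟨_, (reachRoot_single i).sReflPath w⟩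
  finite_orbit v := by
    have hfin := Set.Finite.pi' fun _ : Fin n => h.2
    refine (hfin.image fun f : Fin n → Fin n → ℤ => ∑ j, v j • f j).subset ?_
    rintro _ ⟨w, rfl⟩
    exact ⟨fun j => sReflPath w q (Pi.single j 1), fun j => ⟨_, (reachRoot_single j).sReflPath w⟩,
      by simp only [← map_smul, ← map_sum, ← pi_eq_sum_univ' v]⟩

lemma HasFiniteOrbits.reflect (h : HasFiniteOrbits q) (i : Fin n) :
    HasFiniteOrbits (reflectMat q i) where
  reflectable w := h.reflectable (i :: w)
  finite_orbit v := by
    refine (h.finite_orbit (sReflHom q i v)).subset ?_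
    rintro _ ⟨w, rfl⟩
    exact ⟨i :: w, by simp only [sReflPath_cons, sReflHom_sReflHom]⟩

lemma HasFiniteOrbits.reflectPath (h : HasFiniteOrbits q) (w : List (Fin n)) :
    HasFiniteOrbits (reflectMatPath w q) := by
  induction w generalizing q with
  | nil => exact h
  | cons i _ ih => exact ih (h.reflect i)

lemma HasFiniteOrbits.false_of_loop {P : (Fin n → Fin n → ℂˣ) → Prop} (hq : HasFiniteOrbits q)
    (hP : P q) (w : List (Fin n)) {v η : Fin n → ℤ} (hη : η ≠ 0)
    (h : ∀ q, HasFiniteOrbits q → P q →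
      P (reflectMatPath w q) ∧ sReflPath w q v = v + η ∧ sReflPath w q η = η) : False := by
  have key (N : ℕ) : ∀ q, HasFiniteOrbits q → P q →
      ∃ w', sReflPath w' q v = v + N • η ∧ sReflPath w' q η = η := by
    induction N with
    | zero => exact fun q _ _ => ⟨[], by simp [sReflPath]⟩
    | succ N ih =>
      intro q hq hP
      obtain ⟨h1, h2, h3⟩ := h q hq hP
      obtain ⟨w', hv, he⟩ := ih _ (hq.reflectPath w) h1
      refine ⟨w ++ w', ?_, by rw [sReflPath_append, h3, he]⟩
      rw [sReflPath_append, h2, map_add, hv, he, succ_nsmul, add_assoc]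
  have hinj : Function.Injective fun N : ℕ => v + N • η :=
    (add_right_injective v).comp fun M N h =>
      Nat.cast_injective (smul_left_injective ℤ hη (by simpa only [natCast_zsmul] using h))
  refine Set.infinite_range_of_injective hinj ((hq.finite_orbit v).subset ?_)
  rintro _ ⟨N, rfl⟩
  exact (key N q hq hP).imp fun _ h => h.1

/-! ### Cartan pairs of vertices -/

lemma qtil_comm (a b : Fin n) : qtil q a b = qtil q b a := mul_comm _ _

lemma qtil_self (a : Fin n) : qtil q a a = (q a a : ℂ) ^ 2 := (sq _).symm

lemma coe_reflectMat (i a b : Fin n) : (reflectMat q i a b : ℂ) =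
    q a b * (q a i : ℂ) ^ (-(cij q i b)) * (q i b : ℂ) ^ (-(cij q i a)) *
      (q i i : ℂ) ^ (cij q i a * cij q i b) := by
  simp [reflectMat]

lemma reflectMat_diag (i a : Fin n) : (reflectMat q i a a : ℂ) =
    q a a * qtil q i a ^ (-(cij q i a)) * (q i i : ℂ) ^ (cij q i a * cij q i a) := by
  rw [coe_reflectMat, qtil, mul_zpow]; ring

lemma qtil_reflectMat (i a b : Fin n) : qtil (reflectMat q i) a b =
    qtil q a b * qtil q i a ^ (-(cij q i b)) * qtil q i b ^ (-(cij q i a)) *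
      (q i i : ℂ) ^ (2 * (cij q i a * cij q i b)) := by
  rw [qtil, coe_reflectMat, coe_reflectMat, qtil, qtil, qtil, mul_zpow, mul_zpow, two_mul,
    zpow_add₀ (Units.ne_zero _), mul_comm (cij q i b) (cij q i a)]
  ring

lemma reflectMat_diag_self (i : Fin n) : (reflectMat q i i i : ℂ) = q i i := by
  have h := Units.ne_zero (q i i)
  rw [reflectMat_diag, cij_self, qtil_self, ← zpow_natCast, ← zpow_mul, ← zpow_one_add₀ h,
    ← zpow_add₀ h]
  norm_num

/-- `m` is the least natural number with `t ^ m * e = 1`. -/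
def MinExp (t e : ℂ) (m : ℕ) : Prop := t ^ m * e = 1 ∧ ∀ k < m, t ^ k * e ≠ 1

lemma exists_minExp {t e : ℂ} {m : ℕ} (h : t ^ m * e = 1) : ∃ k, MinExp t e k := by
  classical
  have hex : ∃ k, t ^ k * e = 1 := ⟨m, h⟩
  exact ⟨Nat.find hex, Nat.find_spec hex, fun k hk => Nat.find_min hex hk⟩

lemma mem_cSet_iff {a b : Fin n} {m : ℕ} :
    m ∈ cSet q a b ↔ qnum (q a a) (m + 1) = 0 ∨ (q a a : ℂ) ^ m * qtil q a b = 1 := by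
  rw [cSet, Set.mem_ofPred_eq, mul_eq_zero, sub_eq_zero, eq_comm (a := (1 : ℂ))]

lemma pow_eq_one_of_qnum_eq_zero {t : ℂ} {m : ℕ} (h : qnum t m = 0) : t ^ m = 1 := by
  rw [← sub_eq_zero, ← geom_sum_mul, ← qnum, h, zero_mul]

lemma cij_of_minExp {a b : Fin n} (hab : a ≠ b) {m : ℕ} (h : MinExp (q a a) (qtil q a b) m) :
    cij q a b = -m := by
  suffices sInf (cSet q a b) = m by simp [cij, hab, this]
  have hm : m ∈ cSet q a b := mem_cSet_iff.2 (Or.inr h.1)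
  refine le_antisymm (Nat.sInf_le hm) (le_csInf ⟨m, hm⟩ fun k hk => ?_)
  by_contra! hlt
  rcases mem_cSet_iff.1 hk with h0 | h1
  · refine h.2 (m - (k + 1)) (by omega) ?_
    rw [← h.1, ← Nat.sub_add_cancel (show k + 1 ≤ m by omega), pow_add,
      pow_eq_one_of_qnum_eq_zero h0, mul_one, Nat.add_sub_cancel]
  · exact h.2 k hlt h1

lemma HasFiniteOrbits.qtil_eq_one_of_diag_eq_one (h : HasFiniteOrbits q) {a b : Fin n}
    (hab : a ≠ b) (ha : (q a a : ℂ) = 1) : qtil q a b = 1 := by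
  obtain ⟨m, hm⟩ := h.reflectable [] a b hab.symm
  rcases mem_cSet_iff.1 hm with h0 | h1
  · simp only [reflectMatPath, ha, qnum, one_pow, Finset.sum_const, Finset.card_range,
      nsmul_eq_mul, mul_one] at h0
    exact absurd h0 (Nat.cast_ne_zero.2 m.succ_ne_zero)
  · simpa [reflectMatPath, ha] using h1

/-- The vertices `a` and `b` are of Cartan type in the rank two diagram they span, with Cartan
entries `-m` and `-k`. -/
structure IsCartanPair (q : Fin n → Fin n → ℂˣ) (a b : Fin n) (m k : ℕ) : Prop where
  ne : a ≠ b
  left : MinExp (q a a) (qtil q a b) m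
  right : MinExp (q b b) (qtil q a b) k

namespace IsCartanPair

variable {a b : Fin n} {m k : ℕ}

lemma symm (h : IsCartanPair q a b m k) : IsCartanPair q b a k m :=
  ⟨h.ne.symm, qtil_comm a b ▸ h.right, qtil_comm a b ▸ h.left⟩

lemma qtil_reflectMat_left (h : IsCartanPair q a b m k) :
    qtil (reflectMat q a) a b = qtil q a b := by
  have ha := Units.ne_zero (q a a)
  have he : qtil q a b = (q a a : ℂ) ^ (-(m : ℤ)) := by
    rw [zpow_neg, zpow_natCast, eq_inv_of_mul_eq_one_right h.left.1]
  rw [qtil_reflectMat, cij_of_minExp h.ne h.left, cij_self, qtil_self, he, ← zpow_natCast _ 2,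
    ← zpow_mul, ← zpow_mul, ← zpow_add₀ ha, ← zpow_add₀ ha, ← zpow_add₀ ha]
  congr 1
  push_cast
  ring

lemma reflectMat_right (h : IsCartanPair q a b m k) : (reflectMat q a b b : ℂ) = q b b := by
  rw [reflectMat_diag, cij_of_minExp h.ne h.left, neg_neg, neg_mul_neg, zpow_mul, zpow_natCast,
    zpow_natCast, zpow_natCast, mul_assoc, ← mul_pow, mul_comm (qtil q a b), h.left.1, one_pow,
    mul_one]

lemma reflect (h : IsCartanPair q a b m k) : IsCartanPair (reflectMat q a) a b m k where
  ne := h.ne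
  left := by rw [reflectMat_diag_self, h.qtil_reflectMat_left]; exact h.left
  right := by rw [h.reflectMat_right, h.qtil_reflectMat_left]; exact h.right

lemma sReflHom_apply_left (h : IsCartanPair q a b m k) {v : Fin n → ℤ}
    (hv : ∀ c, c ≠ a → c ≠ b → v c = 0) : sReflHom q a v a = m * v b - v a := by
  have hsum : ∑ j, cij q a j * v j = 2 * v a - m * v b := by
    rw [Fintype.sum_eq_add a b h.ne fun c hc => by rw [hv c hc.1 hc.2, mul_zero], cij_self,
      cij_of_minExp h.ne h.left]
    ring
  rw [sReflHom_apply_self, hsum]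
  ring

-- Since `4 ≤ m * k`, reflecting alternately at `a` and `b` keeps increasing the coordinates.
lemma exists_le_sReflPath (h : IsCartanPair q a b m k) (hmk : 4 ≤ m * k) (N : ℕ)
    {v : Fin n → ℤ} (hv : ∀ c, c ≠ a → c ≠ b → v c = 0) (hpos : 0 < v b)
    (hlt : 2 * v a < m * v b) :
    ∃ w, v a + v b + N ≤ sReflPath w q v a + sReflPath w q v b := by
  induction N generalizing q a b m k v with
  | zero => exact ⟨[], by simp [sReflPath]⟩
  | succ N ih =>
    have ea := h.sReflHom_apply_left hv
    have eb : sReflHom q a v b = v b := sReflHom_apply_of_ne h.ne.symm v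
    have hmk' : (4 : ℤ) ≤ k * m := by rw [mul_comm]; exact_mod_cast hmk
    have hm : (1 : ℤ) ≤ m := by exact_mod_cast Nat.pos_of_ne_zero (by rintro rfl; simp at hmk)
    have hk : (1 : ℤ) ≤ k := by exact_mod_cast Nat.pos_of_ne_zero (by rintro rfl; simp at hmk)
    have hmv : v b ≤ m * v b := le_mul_of_one_le_left hpos.le hm
    have hlt' : 2 * v b < k * (m * v b - v a) := by
      have h1 := mul_lt_mul_of_pos_left hlt (zero_lt_one.trans_le hk)
      have h2 := mul_le_mul_of_nonneg_right hmk' hpos.le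
      linarith
    obtain ⟨w, hw⟩ := ih h.reflect.symm (by rwa [mul_comm]) (v := sReflHom q a v)
      (fun c hcb hca => by rw [sReflHom_apply_of_ne hca, hv c hca hcb])
      (by rw [ea]; omega) (by rwa [ea, eb])
    refine ⟨a :: w, ?_⟩
    rw [sReflPath_cons]
    rw [ea, eb] at hw
    push_cast
    omega

end IsCartanPair

lemma HasFiniteOrbits.mul_lt_four_of_isCartanPair (hq : HasFiniteOrbits q) {a b : Fin n} {m k : ℕ}
    (h : IsCartanPair q a b m k) : m * k < 4 := by
  by_contra! hmk
  obtain ⟨B, hB⟩ := ((hq.finite_orbit (Pi.single b 1)).image fun β => β a + β b).bddAbove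
  have hm : 0 < m := Nat.pos_of_ne_zero (by rintro rfl; simp at hmk)
  obtain ⟨w, hw⟩ := h.exists_le_sReflPath hmk (B.toNat + 1) (v := Pi.single b 1)
    (fun c _ hc => by simp [hc]) (by simp) (by simp [h.ne, hm])
  have hle : sReflPath w q (Pi.single b 1) a + sReflPath w q (Pi.single b 1) b ≤ B :=
    hB ⟨_, ⟨w, rfl⟩, rfl⟩
  have h1 : (Pi.single b 1 : Fin n → ℤ) a + (Pi.single b 1 : Fin n → ℤ) b = 1 := by simp [h.ne]
  omega

end RootSystem

/-! ### Diagrams given by exponents of a root of unity -/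

section Exponents

variable {n : ℕ} {q : Fin n → Fin n → ℂˣ} {N : ℕ} {ζ : ℂ} {τ : Fin n → ℂ} {E : Fin n → Fin n → ℤ}

/-- The generalized Dynkin diagram of `q` has the label `ζ ^ E a a * τ a` at the vertex `a` and the
label `ζ ^ E a b` at the edge between `a ≠ b`; the factor `τ` leaves room for unknown labels. -/
structure ExpDiagram (ζ : ℂ) (τ : Fin n → ℂ) (E : Fin n → Fin n → ℤ)
    (q : Fin n → Fin n → ℂˣ) : Prop where
  diag (a) : (q a a : ℂ) = ζ ^ E a a * τ a
  edge (a b) : a ≠ b → qtil q a b = ζ ^ E a b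

/-- The exponent `k` belongs to the set `cSet` of a vertex with label `ζ ^ x` and an edge with
label `ζ ^ y`, for `ζ` of order `N`. -/
def IsCartanExp (N : ℕ) (x y : ℤ) (k : ℕ) : Prop :=
  (N : ℤ) ∣ k * x + y ∨ ¬ (N : ℤ) ∣ x ∧ (N : ℤ) ∣ (k + 1) * x

instance (x y : ℤ) : DecidablePred (IsCartanExp N x y) := fun _ => instDecidableOr

/-- The negative `-c_{ia}` of the Cartan entry for the vertex label `ζ ^ x` and the edge label
`ζ ^ y`, with the junk value `0` if it is undefined. -/
def cartanExp (N : ℕ) (x y : ℤ) : ℕ :=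
  ((List.range N).find? fun k => IsCartanExp N x y k).getD 0

/-- The coefficients with `s_i α_a = α_a + reflCoeff N E i a • α_i`. -/
def reflCoeff (N : ℕ) (E : Fin n → Fin n → ℤ) (i a : Fin n) : ℤ :=
  if a = i then -2 else cartanExp N (E i i) (E i a)

/-- The exponent of `qtil q i a`, including the case `a = i`. -/
def pairExp (E : Fin n → Fin n → ℤ) (i a : Fin n) : ℤ := if a = i then 2 * E i i else E i a

/-- The exponents of the reflected diagram, reduced modulo `N`. -/
def reflectExp (N : ℕ) (E : Fin n → Fin n → ℤ) (i a b : Fin n) : ℤ :=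
  (if a = b then E a a + reflCoeff N E i a * pairExp E i a + reflCoeff N E i a ^ 2 * E i i
    else E a b + reflCoeff N E i b * pairExp E i a + reflCoeff N E i a * pairExp E i b +
      2 * reflCoeff N E i a * reflCoeff N E i b * E i i) % N

/-- The exponents obtained by successive reflections along a path. -/
def reflectExpPath (N : ℕ) : List (Fin n) → (Fin n → Fin n → ℤ) → Fin n → Fin n → ℤ
  | [], E => E
  | i :: w, E => reflectExpPath N w (reflectExp N E i)

/-- The reflection of `ℤ^n` at a vertex, computed from the exponents. -/
def sReflExp (N : ℕ) (E : Fin n → Fin n → ℤ) (i : Fin n) (v : Fin n → ℤ) : Fin n → ℤ := fun k =>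
  v k + if k = i then ∑ j, reflCoeff N E i j * v j else 0

/-- The composition of reflections of `ℤ^n` along a path, computed from the exponents. -/
def sReflExpPath (N : ℕ) : List (Fin n) → (Fin n → Fin n → ℤ) → (Fin n → ℤ) → Fin n → ℤ
  | [], _, v => v
  | i :: w, E, v => sReflExpPath N w (reflectExp N E i) (sReflExp N E i v)

/-- `k` is the least natural number with `N ∣ k * x + y`. -/
def IsLeastExp (N : ℕ) (x y : ℤ) (k : ℕ) : Prop :=
  (N : ℤ) ∣ k * x + y ∧ ∀ r < k, ¬ (N : ℤ) ∣ r * x + y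

instance (x y : ℤ) : DecidablePred (IsLeastExp N x y) := fun _ => instDecidableAnd

/-- The diagram with exponents `E` contains a vertex labelled `1` with a neighbour, or a pair of
vertices of affine or indefinite Cartan type. -/
def HasForbiddenPair (N : ℕ) (E : Fin n → Fin n → ℤ) : Prop :=
  ∃ a b, a ≠ b ∧ ((N : ℤ) ∣ E a a ∧ ¬ (N : ℤ) ∣ E a b ∨
    ∃ m < N, IsLeastExp N (E a a) (E a b) m ∧
      ∃ k < N, IsLeastExp N (E b b) (E a b) k ∧ 4 ≤ m * k)

instance : DecidablePred (HasForbiddenPair (n := n) N) := fun _ => Fintype.decidableExistsFintype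

lemma zpow_emod (hζ : IsPrimitiveRoot ζ N) (x : ℤ) : ζ ^ (x % N) = ζ ^ x := by
  rcases eq_or_ne ζ 0 with rfl | hz
  · obtain rfl : N = 0 := by
      by_contra hN
      exact hζ.ne_zero hN rfl
    simp
  · conv_rhs => rw [← Int.emod_add_mul_ediv x N, zpow_add₀ hz, zpow_mul, zpow_natCast,
      hζ.pow_eq_one, one_zpow, mul_one]

variable [NeZero N]

lemma zpow_pow_mul_zpow_eq_one_iff (hζ : IsPrimitiveRoot ζ N) {x y : ℤ} {k : ℕ} :
    (ζ ^ x) ^ k * ζ ^ y = 1 ↔ (N : ℤ) ∣ k * x + y := by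
  rw [← hζ.zpow_eq_one_iff_dvd, zpow_add₀ (hζ.ne_zero (NeZero.ne N)), mul_comm (k : ℤ), zpow_mul,
    zpow_natCast]

lemma minExp_zpow_iff (hζ : IsPrimitiveRoot ζ N) {x y : ℤ} {k : ℕ} :
    MinExp (ζ ^ x) (ζ ^ y) k ↔ IsLeastExp N x y k := by
  simp only [MinExp, IsLeastExp, Ne, zpow_pow_mul_zpow_eq_one_iff hζ]

lemma mem_cSet_iff_isCartanExp (hζ : IsPrimitiveRoot ζ N) {i a : Fin n} {x y : ℤ}
    (hx : (q i i : ℂ) = ζ ^ x) (hy : qtil q i a = ζ ^ y) {k : ℕ} :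
    k ∈ cSet q i a ↔ IsCartanExp N x y k := by
  have hqnum : qnum (ζ ^ x) (k + 1) = 0 ↔ ¬ (N : ℤ) ∣ x ∧ (N : ℤ) ∣ (k + 1) * x := by
    rw [← hζ.zpow_eq_one_iff_dvd x, ← hζ.zpow_eq_one_iff_dvd, mul_comm, zpow_mul,
      ← Nat.cast_succ, zpow_natCast]
    constructor
    · refine fun h => ⟨fun h1 => ?_, pow_eq_one_of_qnum_eq_zero h⟩
      simp only [h1, qnum, one_pow, Finset.sum_const, Finset.card_range, nsmul_one] at h
      exact Nat.cast_ne_zero.2 k.succ_ne_zero h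
    · rintro ⟨h1, h2⟩
      rw [← sub_eq_zero, ← geom_sum_mul] at h2
      exact (mul_eq_zero.1 h2).resolve_right (sub_ne_zero.2 h1)
  rw [mem_cSet_iff, hx, hy, hqnum, zpow_pow_mul_zpow_eq_one_iff hζ, or_comm, IsCartanExp]

lemma cartanExp_eq_sInf {x y : ℤ} (h : ∃ k, IsCartanExp N x y k) :
    cartanExp N x y = sInf {k | IsCartanExp N x y k} := by
  set m := sInf {k | IsCartanExp N x y k}
  have hN : 0 < N := NeZero.pos N
  have hmem : IsCartanExp N x y m := Nat.sInf_mem (s := {k | IsCartanExp N x y k}) h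
  have hmin (k : ℕ) (hk : IsCartanExp N x y k) : m ≤ k := Nat.sInf_le hk
  have hlt : m < N := by
    rcases hmem with h1 | ⟨h1, -⟩
    · refine (hmin (m % N) (Or.inl ?_)).trans_lt (Nat.mod_lt m hN)
      rw [Int.natCast_mod, Int.emod_def, sub_mul, sub_add_eq_add_sub, mul_assoc]
      exact h1.sub (dvd_mul_right _ _)
    · refine (hmin (N - 1) (Or.inr ⟨h1, ?_⟩)).trans_lt (Nat.sub_lt hN one_pos)
      rw [← Nat.cast_add_one, Nat.sub_one_add_one hN.ne']
      exact dvd_mul_right _ _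
  have hfind : (List.range N).find? (fun k => IsCartanExp N x y k) = some m := by
    rw [List.find?_range_eq_some]
    exact ⟨decide_eq_true hmem, List.mem_range.2 hlt, fun k hk => by
      simpa using fun h' => hk.not_ge (hmin k h')⟩
  rw [cartanExp, hfind, Option.getD_some]

namespace ExpDiagram

lemma of_lt (hE : ∀ a b, E a b = E b a) (hdiag : ∀ a, (q a a : ℂ) = ζ ^ E a a * τ a)
    (hedge : ∀ a b, a < b → qtil q a b = ζ ^ E a b) : ExpDiagram ζ τ E q := by
  refine ⟨hdiag, fun a b hab => ?_⟩
  rcases hab.lt_or_gt with hlt | hlt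
  · exact hedge a b hlt
  · rw [qtil_comm, hedge b a hlt, hE]

lemma apply_self (h : ExpDiagram ζ τ E q) {i : Fin n} (hτ : τ i = 1) :
    (q i i : ℂ) = ζ ^ E i i := by rw [h.diag, hτ, mul_one]

lemma cij_eq (h : ExpDiagram ζ τ E q) (hζ : IsPrimitiveRoot ζ N) {i : Fin n} (hτ : τ i = 1)
    (hi : reflectable q i) (a : Fin n) : cij q i a = -reflCoeff N E i a := by
  by_cases ha : a = i
  · simp [cij, reflCoeff, ha]
  have hc : cSet q i a = {k | IsCartanExp N (E i i) (E i a) k} :=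
    Set.ext fun k => mem_cSet_iff_isCartanExp hζ (h.apply_self hτ) (h.edge i a (Ne.symm ha))
  have hne := hi a ha
  rw [hc] at hne
  rw [cij, if_neg (Ne.symm ha), reflCoeff, if_neg ha, cartanExp_eq_sInf hne, hc,
    Int.ofNat_eq_natCast]

lemma qtil_eq (h : ExpDiagram ζ τ E q) (hz : ζ ≠ 0) {i : Fin n} (hτ : τ i = 1) (a : Fin n) :
    qtil q i a = ζ ^ pairExp E i a := by
  by_cases ha : a = i
  · rw [ha, qtil_self, h.apply_self hτ, pairExp, if_pos rfl, two_mul, zpow_add₀ hz, sq]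
  · rw [h.edge i a (Ne.symm ha), pairExp, if_neg ha]

lemma reflect (h : ExpDiagram ζ τ E q) (hζ : IsPrimitiveRoot ζ N) {i : Fin n} (hτ : τ i = 1)
    (hi : reflectable q i) : ExpDiagram ζ τ (reflectExp N E i) (reflectMat q i) := by
  have hz := hζ.ne_zero (NeZero.ne N)
  have hc := h.cij_eq hζ hτ hi
  constructor
  · intro a
    rw [reflectMat_diag, hc, h.diag a, h.qtil_eq hz hτ, h.apply_self hτ, reflectExp, if_pos rfl,
      zpow_emod hζ, zpow_add₀ hz, zpow_add₀ hz, ← zpow_mul, ← zpow_mul, neg_neg, neg_mul_neg,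
      ← sq, mul_comm (pairExp E i a), mul_comm (E i i)]
    ring
  · intro a b hab
    rw [qtil_reflectMat, hc, hc, h.edge a b hab, h.qtil_eq hz hτ, h.qtil_eq hz hτ,
      h.apply_self hτ, reflectExp, if_neg hab, zpow_emod hζ, ← zpow_mul, ← zpow_mul, ← zpow_mul,
      ← zpow_add₀ hz, ← zpow_add₀ hz, ← zpow_add₀ hz]
    congr 1
    ring

lemma reflectPath (h : ExpDiagram ζ τ E q) (hζ : IsPrimitiveRoot ζ N) (hq : HasFiniteOrbits q)
    {w : List (Fin n)} (hw : ∀ i ∈ w, τ i = 1) :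
    ExpDiagram ζ τ (reflectExpPath N w E) (reflectMatPath w q) := by
  induction w generalizing E q with
  | nil => exact h
  | cons i w ih =>
    rw [List.forall_mem_cons] at hw
    exact ih (h.reflect hζ hw.1 (hq.reflectable [] i)) (hq.reflect i) hw.2

lemma sReflHom_eq (h : ExpDiagram ζ τ E q) (hζ : IsPrimitiveRoot ζ N) {i : Fin n} (hτ : τ i = 1)
    (hi : reflectable q i) (v : Fin n → ℤ) : sReflHom q i v = sReflExp N E i v := by
  rw [sReflHom_eq_sRefl]
  ext k
  simp only [sRefl, sReflExp, h.cij_eq hζ hτ hi, neg_mul, Finset.sum_neg_distrib]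
  split_ifs <;> ring

lemma sReflPath_eq (h : ExpDiagram ζ τ E q) (hζ : IsPrimitiveRoot ζ N) (hq : HasFiniteOrbits q)
    {w : List (Fin n)} (hw : ∀ i ∈ w, τ i = 1) (v : Fin n → ℤ) :
    sReflPath w q v = sReflExpPath N w E v := by
  induction w generalizing E q v with
  | nil => rfl
  | cons i w ih =>
    rw [List.forall_mem_cons] at hw
    have hi := hq.reflectable [] i
    rw [sReflPath_cons, h.sReflHom_eq hζ hw.1 hi]
    exact ih (h.reflect hζ hw.1 hi) (hq.reflect i) hw.2 _

lemma false_of_loop (h : ExpDiagram ζ τ E q) (hζ : IsPrimitiveRoot ζ N) (hq : HasFiniteOrbits q)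
    {w : List (Fin n)} (hw : ∀ i ∈ w, τ i = 1) {v η : Fin n → ℤ} (hη : η ≠ 0)
    (hE : ∀ a b, reflectExpPath N w E a b = E a b % N) (hv : sReflExpPath N w E v = v + η)
    (hη' : sReflExpPath N w E η = η) : False := by
  refine hq.false_of_loop h w (v := v) hη fun q hq h => ?_
  have h' := h.reflectPath hζ hq hw
  refine ⟨⟨fun a => ?_, fun a b hab => ?_⟩, ?_, ?_⟩
  · rw [h'.diag, hE, zpow_emod hζ]
  · rw [h'.edge a b hab, hE, zpow_emod hζ]
  · rw [h.sReflPath_eq hζ hq hw, hv]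
  · rw [h.sReflPath_eq hζ hq hw, hη']

lemma exists_mul_lt_four (h : ExpDiagram ζ τ E q) (hζ : IsPrimitiveRoot ζ N)
    (hq : HasFiniteOrbits q) {w : List (Fin n)} (hw : ∀ i ∈ w, τ i = 1) {a b : Fin n}
    (hab : a ≠ b) (ha : τ a = 1) {x y : ℤ} (hx : reflectExpPath N w E b b = x)
    (hy : reflectExpPath N w E a b = y) {k m : ℕ}
    (hk : IsLeastExp N (reflectExpPath N w E a a) y k) (hm : (ζ ^ x * τ b) ^ m * ζ ^ y = 1) :
    ∃ m', k * m' < 4 ∧ (ζ ^ x * τ b) ^ m' * ζ ^ y = 1 := by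
  subst hx hy
  have h' := h.reflectPath hζ hq hw
  obtain ⟨m', hm'⟩ := exists_minExp hm
  refine ⟨m', (hq.reflectPath w).mul_lt_four_of_isCartanPair ⟨hab, ?_, ?_⟩, hm'.1⟩
  · rw [h'.apply_self ha, h'.edge a b hab]
    exact (minExp_zpow_iff hζ).2 hk
  · rwa [h'.diag b, h'.edge a b hab]

lemma not_hasForbiddenPair (h : ExpDiagram ζ 1 E q) (hζ : IsPrimitiveRoot ζ N)
    (hq : HasFiniteOrbits q) (w : List (Fin n)) :
    ¬ HasForbiddenPair N (reflectExpPath N w E) := by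
  have h' := h.reflectPath hζ hq (w := w) fun _ _ => rfl
  have hq' := hq.reflectPath w
  rintro ⟨a, b, hab, ⟨ha, he⟩ | ⟨m, -, hm, k, -, hk, hmk⟩⟩
  · rw [← hζ.zpow_eq_one_iff_dvd, ← h'.edge a b hab] at he
    rw [← hζ.zpow_eq_one_iff_dvd, ← h'.apply_self rfl] at ha
    exact he (hq'.qtil_eq_one_of_diag_eq_one hab ha)
  · rw [← minExp_zpow_iff hζ, ← h'.edge a b hab, ← h'.apply_self rfl] at hm hk
    exact hmk.not_gt (hq'.mul_lt_four_of_isCartanPair ⟨hab, hm, hk⟩)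

end ExpDiagram

end Exponents

/-! ### Exclusion of the braiding matrices of rank four, three and two -/

section Exclusion

lemma isOfFinOrder_of_reflectable {n : ℕ} {q : Fin n → Fin n → ℂˣ} {a b : Fin n}
    (h : reflectable q a) (hba : b ≠ a) (he : qtil q a b ≠ 1) (hf : IsOfFinOrder (qtil q a b)) :
    IsOfFinOrder (q a a : ℂ) := by
  obtain ⟨m, hm⟩ := h b hba
  rcases mem_cSet_iff.1 hm with hm | hm
  · exact isOfFinOrder_iff_pow_eq_one.2 ⟨m + 1, m.succ_pos, pow_eq_one_of_qnum_eq_zero hm⟩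
  · have hm0 : m ≠ 0 := by
      rintro rfl
      exact he (by simpa using hm)
    refine IsOfFinOrder.of_pow ?_ hm0
    rw [eq_inv_of_mul_eq_one_left hm]
    obtain ⟨k, hk, h1⟩ := isOfFinOrder_iff_pow_eq_one.1 hf
    exact isOfFinOrder_iff_pow_eq_one.2 ⟨k, hk, by rw [inv_pow, h1, inv_one]⟩

lemma exists_pow_eq_of_dvd_orderOf {t ζ : ℂ} {N : ℕ} (ht : IsOfFinOrder t)
    (hζ : IsPrimitiveRoot ζ N) (hN : N ∣ orderOf t) : ∃ m, t ^ m = ζ := by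
  obtain ⟨c, hc⟩ := hN
  have hN0 : NeZero N := ⟨fun h => ht.orderOf_pos.ne' (by rw [hc, h, zero_mul])⟩
  have hprim : IsPrimitiveRoot (t ^ c) N :=
    (IsPrimitiveRoot.orderOf t).pow ht.orderOf_pos (by rw [hc, mul_comm])
  obtain ⟨i, -, hi⟩ := hprim.eq_pow_of_pow_eq_one hζ.pow_eq_one
  exact ⟨c * i, by rw [pow_mul, hi]⟩

/-- The exponents of the diagram `i — j — k — ℓ` with respect to `p = q̃_{jk}`, if
`q_{ii} = q_{kk} = p ^ r` and `q_{ℓℓ} = p ^ y`. -/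
def chainExp (r y : ℤ) : Fin 4 → Fin 4 → ℤ :=
  ![![r, 1, 0, 0], ![1, -1, 1, 0], ![0, 1, r, 3], ![0, 0, 3, y]]

variable {q : Fin 4 → Fin 4 → ℂˣ} {p t : ℂ} {r : ℤ}

lemma ExpDiagram.chainExp_zpow {y : ℤ} (h : ExpDiagram p ![1, 1, 1, t] (chainExp r 0) q)
    (ht : t = p ^ y) : ExpDiagram p 1 (chainExp r y) q := by
  refine ⟨fun a => ?_, fun a b hab => ?_⟩
  · rw [h.diag]
    fin_cases a <;> simp [chainExp, ht]
  · rw [h.edge a b hab]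
    fin_cases a <;> fin_cases b <;> simp [chainExp] at hab ⊢

lemma isOfFinOrder_of_chainExp {N : ℕ} (hN : N ≠ 0) (hp : IsPrimitiveRoot p N) (hp3 : p ^ 3 ≠ 1)
    (hq : HasFiniteOrbits q) (h : ExpDiagram p ![1, 1, 1, t] (chainExp r 0) q) :
    IsOfFinOrder t := by
  have h33 : (q 3 3 : ℂ) = t := by simpa [chainExp] using h.diag 3
  have h32 : qtil q 3 2 = p ^ 3 := by
    rw [h.edge 3 2 (by decide)]
    rfl
  rw [← h33]
  refine isOfFinOrder_of_reflectable (hq.reflectable [] 3) (b := 2) (by decide) (h32 ▸ hp3) ?_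
  rw [h32]
  exact (isOfFinOrder_iff_pow_eq_one.2 ⟨N, Nat.pos_of_ne_zero hN, hp.pow_eq_one⟩).pow

lemma pow_three_eq_neg_one (hp : IsPrimitiveRoot p 6) : p ^ 3 = -1 :=
  (hp.pow (by norm_num) (by norm_num : 6 = 3 * 2)).eq_neg_one_of_two_right

lemma chain_six_pow_ne_neg_one (hp : IsPrimitiveRoot p 6) (hq : HasFiniteOrbits q)
    (h : ExpDiagram p ![1, 1, 1, t] (chainExp 3 0) q) (m : ℕ) : t ^ m ≠ -1 := by
  intro hm
  have hp3 := pow_three_eq_neg_one hp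
  obtain ⟨m', hm', he⟩ := h.exists_mul_lt_four hp hq (w := [0, 1]) (by simp) (a := 2) (b := 3)
    (by decide) rfl (k := 3) (x := 0) (y := 3) (m := m) (by decide) (by decide) (by decide)
    (by simp [hm, hp3])
  have ht : t = p ^ (3 : ℤ) := by
    have hm2 : m' < 2 := by omega
    interval_cases m'
    · exact absurd (by simpa [hp3] using he) (by norm_num : (-1 : ℂ) ≠ 1)
    · simpa [hp3, neg_eq_iff_eq_neg] using he
  exact (h.chainExp_zpow ht).false_of_loop hp hq (w := [0, 2, 3, 1, 0, 3, 2, 1]) (by simp)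
    (v := ![1, 0, 0, 0]) (η := ![-2, -3, -4, -2]) (by decide) (by decide +kernel)
    (by decide +kernel) (by decide +kernel)

lemma chain_six_pow_ne_sq (hp : IsPrimitiveRoot p 6) (hq : HasFiniteOrbits q)
    (h : ExpDiagram p ![1, 1, 1, t] (chainExp 3 0) q) (m : ℕ) : t ^ m ≠ p ^ 2 := by
  intro hm
  have hp6 := hp.pow_eq_one
  obtain ⟨m', hm', he⟩ := h.exists_mul_lt_four hp hq (w := [0, 2]) (by simp) (a := 1) (b := 3)
    (by decide) rfl (k := 2) (x := 0) (y := (4 : ℕ)) (m := m) (by decide) (by decide) (by decide)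
    (by simp [hm, ← pow_add, hp6])
  have ht : t = p ^ (2 : ℤ) := by
    have hm2 : m' < 2 := by omega
    interval_cases m'
    · exact absurd (by simpa using he) (hp.pow_ne_one_of_pos_of_lt (l := 4) (by simp) (by simp))
    · have he1 : t * p ^ 4 = 1 := by simpa using he
      exact_mod_cast (by linear_combination p ^ 2 * he1 - t * hp6 : t = p ^ 2)
  exact (h.chainExp_zpow ht).not_hasForbiddenPair hp hq [0, 1, 3, 2] (by decide +kernel)

lemma exists_mul_pow_eq_of_coprime (hp : IsPrimitiveRoot p 6) (ht : IsOfFinOrder t)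
    (h : (orderOf t).Coprime 6) : ∃ m, (p * t) ^ m = p := by
  have hcop : (orderOf p).Coprime (orderOf t) := by rwa [← hp.eq_orderOf, Nat.coprime_comm]
  have hord := (Commute.all p t).orderOf_mul_eq_mul_orderOf_of_coprime hcop
  have hfin : IsOfFinOrder (p * t) := by
    rw [← orderOf_pos_iff, hord, ← hp.eq_orderOf]
    exact Nat.mul_pos (by norm_num) ht.orderOf_pos
  refine exists_pow_eq_of_dvd_orderOf hfin hp ?_
  rw [hord, ← hp.eq_orderOf]
  exact dvd_mul_right _ _

lemma chain_six_mul_pow_ne (hp : IsPrimitiveRoot p 6) (hq : HasFiniteOrbits q)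
    (h : ExpDiagram p ![1, 1, 1, t] (chainExp 3 0) q) (m : ℕ) : (p * t) ^ m ≠ p := by
  intro hm
  have hp3 := pow_three_eq_neg_one hp
  have hp6 := hp.pow_eq_one
  obtain ⟨m', hm', he⟩ := h.exists_mul_lt_four hp hq (w := [2, 1]) (by simp) (a := 0) (b := 3)
    (by decide) rfl (k := 1) (x := 1) (y := (5 : ℕ)) (m := m) (by decide) (by decide) (by decide)
    (by rw [zpow_one]; simpa [hm, ← pow_succ'] using hp6)
  replace he : (p * t) ^ m' = p := by
    have he5 : (p * t) ^ m' * p ^ 5 = 1 := by simpa using he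
    linear_combination p * he5 - (p * t) ^ m' * hp6
  rw [one_mul] at hm'
  interval_cases m'
  · exact hp.ne_one (by norm_num) (by simpa using he.symm)
  · have ht : t = p ^ (0 : ℤ) := by simpa [hp.ne_zero] using he
    exact (h.chainExp_zpow ht).not_hasForbiddenPair hp hq [] (by decide)
  · refine chain_six_pow_ne_neg_one hp hq h 6 ?_
    have he2 : p * t ^ 2 = 1 := mul_left_cancel₀ (hp.ne_zero (by norm_num)) <| by
      linear_combination he
    linear_combination t ^ 6 * hp3 - ((p * t ^ 2) ^ 2 + p * t ^ 2 + 1) * he2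
  · refine chain_six_pow_ne_sq hp hq h 6 ?_
    linear_combination (t ^ 3 - p) * (t ^ 3 * hp3 - he)

lemma not_hasFiniteOrbits_of_chain_six (hp : IsPrimitiveRoot p 6)
    (h : ExpDiagram p ![1, 1, 1, t] (chainExp 3 0) q) : ¬ HasFiniteOrbits q := by
  intro hq
  have ht : IsOfFinOrder t := isOfFinOrder_of_chainExp (by norm_num) hp
    (hp.pow_ne_one_of_pos_of_lt (by norm_num) (by norm_num)) hq h
  have h2 : ¬ 2 ∣ orderOf t := fun h2 =>
    let ⟨m, hm⟩ := exists_pow_eq_of_dvd_orderOf ht (IsPrimitiveRoot.neg_one 0 (by norm_num)) h2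
    chain_six_pow_ne_neg_one hp hq h m hm
  have h3 : ¬ 3 ∣ orderOf t := fun h3 =>
    let ⟨m, hm⟩ := exists_pow_eq_of_dvd_orderOf ht (hp.pow (by norm_num) (by norm_num)) h3
    chain_six_pow_ne_sq hp hq h m hm
  have hcop : (orderOf t).Coprime (2 * 3) := Nat.Coprime.mul_right
    ((Nat.Prime.coprime_iff_not_dvd Nat.prime_two).2 h2).symm
    ((Nat.Prime.coprime_iff_not_dvd Nat.prime_three).2 h3).symm
  obtain ⟨m, hm⟩ := exists_mul_pow_eq_of_coprime hp ht hcop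
  exact chain_six_mul_pow_ne hp hq h m hm

/-! ### `q̃_{jk}` of order four -/

lemma sq_eq_neg_one (hp : IsPrimitiveRoot p 4) : p ^ 2 = -1 :=
  (hp.pow (by norm_num) (by norm_num : 4 = 2 * 2)).eq_neg_one_of_two_right

lemma prime_pow_dvd_or_dvd_of_dvd_lcm {l k a b : ℕ} (hl : l.Prime) (ha : a ≠ 0) (hb : b ≠ 0)
    (h : l ^ k ∣ a.lcm b) : l ^ k ∣ a ∨ l ^ k ∣ b := by
  rwa [hl.pow_dvd_iff_le_factorization (Nat.lcm_ne_zero ha hb), Nat.factorization_lcm ha hb,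
    Finsupp.sup_apply, le_sup_iff, ← hl.pow_dvd_iff_le_factorization ha,
    ← hl.pow_dvd_iff_le_factorization hb] at h

lemma exists_pow_eq_or_mul_pow_eq (hp : IsPrimitiveRoot p 4) (ht : IsOfFinOrder t) :
    (∃ m, t ^ m = p) ∨ ∃ m, (p * t) ^ m = p ^ 3 := by
  have hpt : IsOfFinOrder (p * t) :=
    (Commute.all p t).isOfFinOrder_mul
      (isOfFinOrder_iff_pow_eq_one.2 ⟨4, by norm_num, hp.pow_eq_one⟩) ht
  have h4 : 2 ^ 2 ∣ (orderOf t).lcm (orderOf (p * t)) := by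
    refine hp.dvd_of_pow_eq_one _ ?_
    have h1 := orderOf_dvd_iff_pow_eq_one.1 (Nat.dvd_lcm_left (orderOf t) (orderOf (p * t)))
    have h2 := orderOf_dvd_iff_pow_eq_one.1 (Nat.dvd_lcm_right (orderOf t) (orderOf (p * t)))
    rwa [mul_pow, h1, mul_one] at h2
  rcases prime_pow_dvd_or_dvd_of_dvd_lcm Nat.prime_two ht.orderOf_pos.ne' hpt.orderOf_pos.ne' h4
    with h | h
  · exact .inl (exists_pow_eq_of_dvd_orderOf ht hp h)
  · exact .inr (exists_pow_eq_of_dvd_orderOf hpt (hp.pow_of_coprime 3 (by norm_num)) h)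

lemma chain_four_ne_one (hp : IsPrimitiveRoot p 4) (hq : HasFiniteOrbits q)
    (h : ExpDiagram p ![1, 1, 1, t] (chainExp 2 0) q) : t ≠ 1 := fun ht =>
  (h.chainExp_zpow (y := 0) (by simp [ht])).not_hasForbiddenPair hp hq [] (by decide)

lemma chain_four_mul_ne_one (hp : IsPrimitiveRoot p 4) (hq : HasFiniteOrbits q)
    (h : ExpDiagram p ![1, 1, 1, t] (chainExp 2 0) q) : p * t ≠ 1 := fun hpt =>
  have ht : t = p ^ 3 := by linear_combination p ^ 3 * hpt - t * hp.pow_eq_one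
  (h.chainExp_zpow (y := (3 : ℕ)) (by rw [zpow_natCast, ht])).not_hasForbiddenPair hp hq [2]
    (by decide)

lemma chain_four_exists_pow (hp : IsPrimitiveRoot p 4) (hq : HasFiniteOrbits q)
    (h : ExpDiagram p ![1, 1, 1, t] (chainExp 2 0) q) :
    (∃ m < 4, t ^ m * p ^ 3 = 1) ∨ ∃ m < 4, (p * t) ^ m * p = 1 := by
  have hp4 := hp.pow_eq_one
  have ht : IsOfFinOrder t := isOfFinOrder_of_chainExp (by norm_num) hp
    (hp.pow_ne_one_of_pos_of_lt (by norm_num) (by norm_num)) hq h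
  rcases exists_pow_eq_or_mul_pow_eq hp ht with ⟨m, hm⟩ | ⟨m, hm⟩
  · obtain ⟨m', hm', he⟩ := h.exists_mul_lt_four hp hq (w := [0, 1]) (by simp) (a := 2) (b := 3)
      (by decide) rfl (k := 1) (x := 0) (y := (3 : ℕ)) (m := m) (by decide) (by decide)
      (by decide) (by rw [zpow_natCast, zpow_zero, one_mul]; simp [hm, ← pow_succ', hp4])
    rw [zpow_natCast, zpow_zero, one_mul] at he
    exact .inl ⟨m', by omega, he⟩
  · obtain ⟨m', hm', he⟩ := h.exists_mul_lt_four hp hq (w := [2, 1]) (by simp) (a := 2) (b := 3)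
      (by decide) rfl (k := 1) (x := 1) (y := 1) (m := m) (by decide) (by decide)
      (by decide) (by rw [zpow_one]; simp [hm, ← pow_succ, hp4])
    rw [zpow_one] at he
    exact .inr ⟨m', by omega, he⟩

lemma exists_isPrimitiveRoot_pow_eq_of_order_four (hp : IsPrimitiveRoot p 4) :
    ∃ ζ : ℂ, IsPrimitiveRoot ζ 24 ∧ ζ ^ 6 = p := by
  have hξ : IsPrimitiveRoot (Complex.exp (2 * Real.pi * Complex.I / (24 : ℕ))) 24 :=
    Complex.isPrimitiveRoot_exp 24 (by norm_num)
  set ξ := Complex.exp (2 * Real.pi * Complex.I / (24 : ℕ))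
  have hξ6 : IsPrimitiveRoot (ξ ^ 6) 4 := hξ.pow (by norm_num) (by norm_num)
  obtain ⟨i, hi, hi4, rfl⟩ := hξ6.isPrimitiveRoot_iff.1 hp
  -- `i` may be divisible by `3`, but `i + 4` is coprime to `24`
  have hi24 : (i + 4).Coprime 24 := by
    interval_cases i <;> first | decide | exact absurd hi4 (by decide)
  refine ⟨ξ ^ (i + 4), hξ.pow_of_coprime _ hi24, ?_⟩
  linear_combination ξ ^ (6 * i) * hξ.pow_eq_one

/-- The exponents `x` for which `q_{ℓℓ} = ζ ^ x`, with `ζ` of order `24` and `q̃_{jk} = ζ ^ 6`, is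
not excluded by the braiding matrix of `x_i, x_j, x_k, x_ℓ`. -/
def chainExponents : Finset ℕ := {2, 3, 6, 8, 10, 12, 15, 16}

lemma pow_twentyfour_eq_one_of_order_four (hp : IsPrimitiveRoot p 4)
    (h : (∃ m < 4, t ^ m * p ^ 3 = 1) ∨ ∃ m < 4, (p * t) ^ m * p = 1) : t ^ 24 = 1 := by
  have hp4 := hp.pow_eq_one
  obtain ⟨m, hm, hm0, h4⟩ : ∃ m < 4, m ≠ 0 ∧ (t ^ m) ^ 4 = 1 := by
    rcases h with ⟨m, hm, h⟩ | ⟨m, hm, h⟩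
    · refine ⟨m, hm, ?_, ?_⟩
      · rintro rfl
        exact hp.pow_ne_one_of_pos_of_lt (l := 3) (by norm_num) (by norm_num) (by simpa using h)
      · calc (t ^ m) ^ 4 = (t ^ m * p ^ 3) ^ 4 := by
              rw [mul_pow, pow_right_comm p, hp4, one_pow, mul_one]
          _ = 1 := by rw [h, one_pow]
    · refine ⟨m, hm, ?_, ?_⟩
      · rintro rfl
        exact hp.ne_one (by norm_num) (by simpa using h)
      · calc (t ^ m) ^ 4 = ((p * t) ^ m * p) ^ 4 := by
              rw [mul_pow, mul_pow, mul_pow, pow_right_comm p, hp4, one_pow, one_mul, mul_one]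
          _ = 1 := by rw [h, one_pow]
  obtain ⟨c, hc⟩ : m * 4 ∣ 24 := by interval_cases m <;> simp_all
  rw [hc, pow_mul, pow_mul, h4, one_pow]

lemma chain_four_exists_exponent {ζ : ℂ} (hζ : IsPrimitiveRoot ζ 24) (hq : HasFiniteOrbits q)
    (h : ExpDiagram (ζ ^ 6) ![1, 1, 1, t] (chainExp 2 0) q) :
    ∃ x ∈ chainExponents, t = ζ ^ x := by
  have hp : IsPrimitiveRoot (ζ ^ 6) 4 := hζ.pow (by norm_num) (by norm_num)
  have hpow := chain_four_exists_pow hp hq h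
  obtain ⟨x, hx, rfl⟩ := hζ.eq_pow_of_pow_eq_one (pow_twentyfour_eq_one_of_order_four hp hpow)
  refine ⟨x, ?_, rfl⟩
  have hx1 := chain_four_ne_one hp hq h
  have hx6 := chain_four_mul_ne_one hp hq h
  simp only [← pow_mul, ← pow_add, Ne, hζ.pow_eq_one_iff_dvd] at hpow hx1 hx6
  clear h
  revert x
  decide +kernel

lemma not_hasFiniteOrbits_of_pair {q : Fin 2 → Fin 2 → ℂˣ} {ζ : ℂ} (hζ : IsPrimitiveRoot ζ 24)
    {x : ℕ} (hx : x ∈ chainExponents) (h : ExpDiagram ζ 1 ![![x - 6, 12], ![12, -6]] q) :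
    ¬ HasFiniteOrbits q := fun hq =>
  have hpair : ∀ x ∈ chainExponents, HasForbiddenPair 24 ![![(x : ℤ) - 6, 12], ![12, -6]] := by
    decide +kernel
  h.not_hasForbiddenPair hζ hq [] (hpair x hx)

lemma not_hasFiniteOrbits_of_triple {q : Fin 3 → Fin 3 → ℂˣ} {ζ : ℂ} (hζ : IsPrimitiveRoot ζ 24)
    {x : ℕ} (hx : x ∈ chainExponents)
    (h : ExpDiagram ζ 1 ![![x + 18, 6, 0], ![6, 12, 6], ![0, 6, -6]] q) :
    ¬ HasFiniteOrbits q := fun hq =>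
  have htriple : ∀ x ∈ chainExponents, ∃ w ∈ [[], [1], [1, 0]], HasForbiddenPair 24
      (reflectExpPath 24 w ![![(x : ℤ) + 18, 6, 0], ![6, 12, 6], ![0, 6, -6]]) := by
    decide +kernel
  let ⟨w, _, hw⟩ := htriple x hx
  h.not_hasForbiddenPair hζ hq w hw

end Exclusion

/-! ### Families of generators and one further primitive element -/

section Families

variable {θ n : ℕ} {q : Fin θ → Fin θ → ℂˣ} {S : BraidedStr θ q} {I : Submodule ℂ (TV θ)}
  {ι : Fin n → Fin θ}

lemma primitiveMod_gen (i : Fin θ) : PrimitiveMod S I (gen θ i) := by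
  rw [PrimitiveMod, S.Δ_gen, sub_self]
  exact zero_mem _

lemma exists_eq_of_mem_Wfil_one {u : TV n} (hu : u ∈ Wfil n 1) :
    ∃ (c₀ : ℂ) (c : Fin n → ℂ), u = c₀ • 1 + ∑ a, c a • gen n a := by
  have hle : Wfil n 1 ≤ Submodule.span ℂ (insert 1 (Set.range (gen n))) := by
    refine Submodule.span_mono ?_
    rintro _ ⟨w, hw, rfl⟩
    match w, hw with
    | [], _ => exact Or.inl wordElem_nil
    | [a], _ => exact Or.inr ⟨a, (wordElem_singleton a).symm⟩
  obtain ⟨c₀, z, hz, rfl⟩ := Submodule.mem_span_insert.1 (hle hu)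
  obtain ⟨c, rfl⟩ := (Submodule.mem_span_range_iff_exists_fun ℂ).1 hz
  exact ⟨c₀, c, rfl⟩

lemma coord_eq_zero_of_mem_homogD {d : Fin θ → ℕ} {x : TV θ} (hx : x ∈ homogD θ d)
    {v : List (Fin θ)} (hv : v.length ≠ ∑ t, d t) : (wordBasis θ).coord v x = 0 := by
  refine map_eq_of_mem_wordSpan (g := 0) (fun w hw => ?_) hx
  rw [coord_wordElem, if_neg, LinearMap.zero_apply]
  rintro rfl
  exact hv (by rw [length_eq_sum_degW, hw])

lemma coeff_eq_zero_of_coord_eq_zero (hι : Function.Injective ι) {c₀ : ℂ} {c : Fin n → ℂ}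
    (h : ∀ v : List (Fin θ), v.length < 2 →
      (wordBasis θ).coord v (c₀ • 1 + ∑ a, c a • gen θ (ι a)) = 0) : c₀ = 0 ∧ c = 0 := by
  simp only [← wordElem_nil, ← wordElem_singleton, map_add, map_sum, map_smul, coord_wordElem,
    smul_eq_mul, mul_ite, mul_one, mul_zero] at h
  refine ⟨by simpa using h [] Nat.two_pos, funext fun a => ?_⟩
  simpa [hι.eq_iff] using h [ι a] Nat.one_lt_two

lemma hasFiniteOrbits_subMat_gen (hAAH : AAH) (hI : IsPreNicholsIdeal S I) (hGK : FinGK I)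
    (hι : Function.Injective ι) : HasFiniteOrbits (subMat q fun a => δ θ (ι a)) := by
  refine (finiteRootSystem_subMat hAAH hI hGK (y := fun a => gen θ (ι a))
    (fun a => gen_mem_homogD _) (fun a => primitiveMod_gen _) fun u hu hy => ?_).hasFiniteOrbits
  obtain ⟨c₀, c, rfl⟩ := exists_eq_of_mem_Wfil_one hu
  obtain ⟨rfl, rfl⟩ := coeff_eq_zero_of_coord_eq_zero hι (c₀ := c₀) (c := c) fun v hv =>
    hI.coord_eq_zero (by simpa using hy) hv
  simp

lemma mem_of_not_hasFiniteOrbits_subMat (hAAH : AAH) (hI : IsPreNicholsIdeal S I) (hGK : FinGK I)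
    (hι : Function.Injective ι) {d : Fin θ → ℕ} (hd : 2 ≤ ∑ t, d t) {y : TV θ}
    (hy : y ∈ homogD θ d) (hp : PrimitiveMod S I y)
    (h : ¬ HasFiniteOrbits (subMat q (Matrix.vecCons d fun a => δ θ (ι a)))) : y ∈ I := by
  by_contra hyI
  refine h (finiteRootSystem_subMat hAAH hI hGK (y := Matrix.vecCons y fun a => gen θ (ι a))
    (Fin.cases hy fun a => gen_mem_homogD _) (Fin.cases hp fun a => primitiveMod_gen _)
    fun u hu hyu => ?_).hasFiniteOrbits
  obtain ⟨c₀, c, rfl⟩ := exists_eq_of_mem_Wfil_one hu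
  have hmem : c₀ • 1 + (c 0 • y + ∑ a : Fin n, c a.succ • gen θ (ι a)) ∈ I := by
    simpa [Fin.sum_univ_succ] using hyu
  obtain ⟨rfl, hc⟩ : c₀ = 0 ∧ (fun a : Fin n => c a.succ) = 0 := by
    refine coeff_eq_zero_of_coord_eq_zero hι fun v hv => ?_
    have hv' := hI.coord_eq_zero hmem hv
    rwa [map_add, map_add, map_smul _ (c 0) y, coord_eq_zero_of_mem_homogD hy (by omega), smul_zero,
      zero_add, ← map_add] at hv'
  replace hc (a : Fin n) : c a.succ = 0 := congrFun hc a
  have hc0 : c 0 = 0 := by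
    by_contra h0
    exact hyI ((I.smul_mem_iff h0).1 (by simpa [hc] using hmem))
  simp [Fin.sum_univ_succ, hc, hc0]

end Families

/-! ### Coproducts of braided commutators -/

section Commutators

variable {θ : ℕ} {q : Fin θ → Fin θ → ℂˣ} {S : BraidedStr θ q} {I : Submodule ℂ (TV θ)}
  {α β γ : Fin θ → ℕ} {a b : TV θ}

lemma brk_mem_homogD (ha : a ∈ homogD θ α) (hb : b ∈ homogD θ β) :
    brk q α β a b ∈ homogD θ (α + β) :=
  sub_mem (mul_mem_homogD ha hb) (Submodule.smul_mem _ _ (add_comm β α ▸ mul_mem_homogD hb ha))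

lemma xw_two (i j : Fin θ) :
    xw q [i, j] = brk q (δ θ i) (δ θ j) (gen θ i) (gen θ j) := by
  change brk q (δ θ i) (degW θ [j]) (gen θ i) (gen θ j) = _
  rw [degW_singleton]

lemma xw_mem_homogD (w : List (Fin θ)) : xw q w ∈ homogD θ (degW θ w) := by
  induction w with
  | nil => exact degW_nil ▸ one_mem_homogD
  | cons i w ih =>
    match w, ih with
    | [], _ => exact degW_singleton i ▸ gen_mem_homogD i
    | j :: w, ih => exact degW_cons i (j :: w) ▸ brk_mem_homogD (gen_mem_homogD i) ih

lemma IsPreNicholsIdeal.brk_mem_left (hI : IsPreNicholsIdeal S I) (ha : a ∈ I) :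
    brk q α β a b ∈ I :=
  sub_mem (hI.mul_right _ _ ha) (Submodule.smul_mem _ _ (hI.mul_left _ _ ha))

lemma IsPreNicholsIdeal.brk_mem_right (hI : IsPreNicholsIdeal S I) (hb : b ∈ I) :
    brk q α β a b ∈ I :=
  sub_mem (hI.mul_left _ _ hb) (Submodule.smul_mem _ _ (hI.mul_right _ _ hb))

namespace BraidedStr

variable (S : BraidedStr θ q)

/-- The commutator `X Y - c Y X` in the braided tensor product `T(V) ⊗ T(V)`; the coproduct of a
braided commutator is of this form. -/
def brkTensor (c : ℂ) :
    TV θ ⊗[ℂ] TV θ →ₗ[ℂ] TV θ ⊗[ℂ] TV θ →ₗ[ℂ] TV θ ⊗[ℂ] TV θ :=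
  S.mulB + (-c) • S.mulB.flip

lemma Δ_brk (α β : Fin θ → ℕ) (u v : TV θ) :
    S.Δ (brk q α β u v) = S.brkTensor (qf q α β) (S.Δ u) (S.Δ v) := by
  simp [brk, brkTensor, S.Δ_mul, sub_eq_add_neg]

lemma mulB_Δ_gen_left (i : Fin θ) (ha : a ∈ homogD θ α) (b : TV θ) :
    S.mulB (S.Δ (gen θ i)) (a ⊗ₜ b) =
      (gen θ i * a) ⊗ₜ b + qf q (δ θ i) α • (a ⊗ₜ (gen θ i * b)) := by
  rw [S.Δ_gen, map_add, LinearMap.add_apply, S.mulB_homog _ _ one_mem_homogD ha,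
    S.mulB_homog _ _ (gen_mem_homogD i) ha]
  simp [qf_zero_left]

lemma mulB_Δ_gen_right (i : Fin θ) (hb : b ∈ homogD θ β) (a : TV θ) :
    S.mulB (a ⊗ₜ b) (S.Δ (gen θ i)) =
      qf q β (δ θ i) • ((a * gen θ i) ⊗ₜ b) + a ⊗ₜ (b * gen θ i) := by
  rw [S.Δ_gen, map_add, S.mulB_homog _ _ hb one_mem_homogD,
    S.mulB_homog _ _ hb (gen_mem_homogD i)]
  simp [qf_zero_right]

lemma brkTensor_Δ_gen_left (i : Fin θ) (ha : a ∈ homogD θ α) (hb : b ∈ homogD θ β)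
    (hγ : γ = α + β) :
    S.brkTensor (qf q (δ θ i) γ) (S.Δ (gen θ i)) (a ⊗ₜ b) =
      (gen θ i * a - (qf q (δ θ i) α * (qf q (δ θ i) β * qf q β (δ θ i))) • (a * gen θ i)) ⊗ₜ b +
        qf q (δ θ i) α • (a ⊗ₜ brk q (δ θ i) β (gen θ i) b) := by
  simp only [brkTensor, LinearMap.add_apply, LinearMap.smul_apply, LinearMap.flip_apply,
    S.mulB_Δ_gen_left i ha, S.mulB_Δ_gen_right i hb, hγ, qf_add_right, brk,
    TensorProduct.sub_tmul, TensorProduct.tmul_sub, ← TensorProduct.smul_tmul',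
    TensorProduct.tmul_smul]
  module

lemma brkTensor_Δ_gen_right (k : Fin θ) (ha : a ∈ homogD θ α) (hb : b ∈ homogD θ β)
    (hγ : γ = α + β) :
    S.brkTensor (qf q γ (δ θ k)) (a ⊗ₜ b) (S.Δ (gen θ k)) =
      qf q β (δ θ k) • (brk q α (δ θ k) a (gen θ k) ⊗ₜ b) +
        a ⊗ₜ (b * gen θ k -
          (qf q α (δ θ k) * qf q (δ θ k) α * qf q β (δ θ k)) • (gen θ k * b)) := by
  simp only [brkTensor, LinearMap.add_apply, LinearMap.smul_apply, LinearMap.flip_apply,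
    S.mulB_Δ_gen_left k ha, S.mulB_Δ_gen_right k hb, hγ, qf_add_left, brk,
    TensorProduct.sub_tmul, TensorProduct.tmul_sub, ← TensorProduct.smul_tmul',
    TensorProduct.tmul_smul]
  module

lemma brkTensor_primitive_Δ_gen (k : Fin θ) (ha : a ∈ homogD θ α) :
    S.brkTensor (qf q α (δ θ k)) (a ⊗ₜ 1 + 1 ⊗ₜ a) (S.Δ (gen θ k)) =
      brk q α (δ θ k) a (gen θ k) ⊗ₜ 1 + 1 ⊗ₜ brk q α (δ θ k) a (gen θ k) +
        (1 - qf q α (δ θ k) * qf q (δ θ k) α) • (a ⊗ₜ gen θ k) := by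
  rw [map_add, LinearMap.add_apply,
    S.brkTensor_Δ_gen_right k ha one_mem_homogD (add_zero α).symm,
    S.brkTensor_Δ_gen_right k one_mem_homogD ha (zero_add α).symm]
  simp only [brk, qf_zero_left, qf_zero_right, one_smul, one_mul, mul_one, sub_self,
    TensorProduct.zero_tmul, smul_zero, zero_add, TensorProduct.tmul_sub, TensorProduct.tmul_smul]
  module

lemma Δ_xw_two (i j : Fin θ) :
    S.Δ (xw q [i, j]) = xw q [i, j] ⊗ₜ 1 + 1 ⊗ₜ xw q [i, j] +
      (1 - qtil q i j) • (gen θ i ⊗ₜ gen θ j) := by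
  rw [xw_two, S.Δ_brk, S.Δ_gen i, S.brkTensor_primitive_Δ_gen j (gen_mem_homogD i), qf_delta,
    qf_delta, qtil]

lemma Δ_xw_three {j k l : Fin θ} (h : qtil q j l = 1) :
    S.Δ (xw q [j, k, l]) = xw q [j, k, l] ⊗ₜ 1 + 1 ⊗ₜ xw q [j, k, l] +
      (1 - qtil q j k) • (gen θ j ⊗ₜ xw q [k, l]) +
      (1 - qtil q k l) • (xw q [j, k] ⊗ₜ gen θ l + (q j k : ℂ) • (gen θ k ⊗ₜ xw q [j, l])) := by
  have hjl : (q j l : ℂ) * q l j = 1 := h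
  have hjkl : qf q (δ θ j) (degW θ [k, l]) * qf q (degW θ [k, l]) (δ θ j) = qtil q j k := by
    rw [degW_cons, degW_singleton, qf_add_left, qf_add_right]
    simp only [qf_delta, qtil]
    linear_combination (q j k : ℂ) * q k j * hjl
  change S.Δ (brk q (δ θ j) (degW θ [k, l]) (gen θ j) (xw q [k, l])) = _
  rw [S.Δ_brk, S.Δ_xw_two, map_add, map_add, map_smul,
    S.brkTensor_Δ_gen_left j (xw_mem_homogD _) one_mem_homogD (add_zero _).symm,
    S.brkTensor_Δ_gen_left j one_mem_homogD (xw_mem_homogD _) (zero_add _).symm,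
    S.brkTensor_Δ_gen_left j (gen_mem_homogD k) (gen_mem_homogD l)
      (by rw [degW_cons, degW_singleton])]
  simp only [hjkl, hjl, xw, ad1, brk, degW_singleton, qf_zero_left, qf_zero_right, qf_delta,
    TensorProduct.sub_tmul, ← TensorProduct.smul_tmul', one_smul, one_mul, mul_one, sub_self,
    TensorProduct.tmul_zero, smul_zero, add_zero]
  module

end BraidedStr

lemma primitiveMod_xw_two {i j : Fin θ} (h : qtil q i j = 1) : PrimitiveMod S I (xw q [i, j]) := by
  rw [PrimitiveMod, S.Δ_xw_two, h]
  simp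

end Commutators

/-! ### Primitivity of `[x_{jkl}, x_k]` -/

section Primitivity

variable {θ : ℕ} {q : Fin θ → Fin θ → ℂˣ} {S : BraidedStr θ q} {I : Submodule ℂ (TV θ)}
  {j k l : Fin θ}

lemma IsPreNicholsIdeal.brkTensor_mem_left (hI : IsPreNicholsIdeal S I) {c : ℂ}
    {X : TV θ ⊗[ℂ] TV θ} (hX : X ∈ mixedSub I) (Y : TV θ ⊗[ℂ] TV θ) :
    S.brkTensor c X Y ∈ mixedSub I :=
  add_mem (hI.mulB_mem_left Y hX) (Submodule.smul_mem _ _ (hI.mulB_mem_right Y hX))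

lemma IsPreNicholsIdeal.brk_xw_two_mem (hI : IsPreNicholsIdeal S I) (hk : (q k k : ℂ) = -1)
    (hsq : gen θ k * gen θ k ∈ I) : brk q (degW θ [j, k]) (δ θ k) (xw q [j, k]) (gen θ k) ∈ I := by
  have key : brk q (degW θ [j, k]) (δ θ k) (xw q [j, k]) (gen θ k) =
      gen θ j * (gen θ k * gen θ k) - (q j k : ℂ) ^ 2 • (gen θ k * gen θ k * gen θ j) := by
    simp only [xw, ad1, brk, degW_cons, degW_nil, add_zero, qf_add_left, qf_delta, hk, mul_sub,
      sub_mul, smul_mul_assoc, mul_smul_comm, mul_assoc, smul_sub]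
    module
  rw [key]
  exact sub_mem (hI.mul_left _ _ hsq) (Submodule.smul_mem _ _ (hI.mul_right _ _ hsq))

lemma IsPreNicholsIdeal.xw_two_mul_add_mem (hI : IsPreNicholsIdeal S I)
    (hsq : gen θ k * gen θ k ∈ I) {p : ℂ} (hp : p * qtil q k l = 1) :
    xw q [k, l] * gen θ k + (p * q l k) • (gen θ k * xw q [k, l]) ∈ I := by
  have key : xw q [k, l] * gen θ k + (p * q l k) • (gen θ k * xw q [k, l]) =
      (p * q l k) • (gen θ k * gen θ k * gen θ l) -
        (q k l : ℂ) • (gen θ l * (gen θ k * gen θ k)) := by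
    simp only [xw, ad1, brk, degW_cons, degW_nil, add_zero, qf_delta, mul_sub, sub_mul,
      smul_mul_assoc, mul_smul_comm, mul_assoc, smul_sub]
    rw [qtil] at hp
    linear_combination (norm := module) (-hp) • (gen θ k * (gen θ l * gen θ k))
  rw [key]
  exact sub_mem (Submodule.smul_mem _ _ (hI.mul_right _ _ hsq))
    (Submodule.smul_mem _ _ (hI.mul_left _ _ hsq))

lemma gen_mul_gen_sub_smul {p : ℂ} (hp : p * qtil q k l = 1) :
    gen θ l * gen θ k - (p * q l k) • (gen θ k * gen θ l) = -(p * q l k) • xw q [k, l] := by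
  rw [qtil] at hp
  rw [xw_two, brk, qf_delta]
  linear_combination (norm := module) -hp • (gen θ l * gen θ k)

lemma BraidedStr.Δ_brk_xw_three (S : BraidedStr θ q) (hk : (q k k : ℂ) = -1)
    (hjl : qtil q j l = 1) (hjkl : qtil q j k * qtil q k l = 1) :
    S.Δ (brk q (degW θ [j, k, l]) (δ θ k) (xw q [j, k, l]) (gen θ k)) =
      brk q (degW θ [j, k, l]) (δ θ k) (xw q [j, k, l]) (gen θ k) ⊗ₜ 1 +
        1 ⊗ₜ brk q (degW θ [j, k, l]) (δ θ k) (xw q [j, k, l]) (gen θ k) +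
      ((1 - qtil q j k) • (gen θ j ⊗ₜ (xw q [k, l] * gen θ k +
          (qtil q j k * q l k) • (gen θ k * xw q [k, l]))) +
        ((1 - qtil q k l) * q l k) •
          (brk q (degW θ [j, k]) (δ θ k) (xw q [j, k]) (gen θ k) ⊗ₜ gen θ l) +
        ((1 - qtil q k l) * q j k) •
          S.brkTensor (qf q (degW θ [j, k, l]) (δ θ k)) (gen θ k ⊗ₜ xw q [j, l])
            (S.Δ (gen θ k))) := by
  have hu : qf q (degW θ [j, k, l]) (δ θ k) * qf q (δ θ k) (degW θ [j, k, l]) = 1 := by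
    simp only [degW_cons, degW_nil, add_zero, qf_add_left, qf_add_right, qf_delta, hk]
    simp only [qtil] at hjkl
    linear_combination hjkl
  have hv : qf q (degW θ [j, k]) (δ θ k) * qf q (δ θ k) (degW θ [j, k]) = qtil q j k := by
    simp only [degW_cons, degW_nil, add_zero, qf_add_left, qf_add_right, qf_delta, hk, qtil]
    ring
  have hw : qf q (degW θ [k, l]) (δ θ k) = -q l k := by
    simp only [degW_cons, degW_nil, add_zero, qf_add_left, qf_delta, hk, neg_one_mul]
  have hjk : (q j k : ℂ) * q k j = qtil q j k := rfl
  rw [S.Δ_brk, S.Δ_xw_three hjl, map_add, map_add, LinearMap.add_apply, LinearMap.add_apply,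
    S.brkTensor_primitive_Δ_gen k (xw_mem_homogD [j, k, l])]
  simp only [map_add, map_smul, LinearMap.add_apply, LinearMap.smul_apply]
  rw [S.brkTensor_Δ_gen_right k (gen_mem_homogD j) (xw_mem_homogD [k, l]) (degW_cons j _),
    S.brkTensor_Δ_gen_right k (xw_mem_homogD [j, k]) (gen_mem_homogD l)
      (by simp only [degW_cons, degW_nil, add_zero, add_assoc])]
  simp only [hu, hv, hw, hjk, gen_mul_gen_sub_smul hjkl, qf_delta, ← xw_two, TensorProduct.tmul_add,
    TensorProduct.tmul_sub, TensorProduct.tmul_smul]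
  linear_combination (norm := module) ((q l k : ℂ) * hjkl) • (xw q [j, k] ⊗ₜ[ℂ] xw q [k, l])

lemma primitiveMod_brk_xw_three (hI : IsPreNicholsIdeal S I) (hk : (q k k : ℂ) = -1)
    (hjl : qtil q j l = 1) (hjkl : qtil q j k * qtil q k l = 1)
    (hsq : gen θ k * gen θ k ∈ I) (hx : xw q [j, l] ∈ I) :
    PrimitiveMod S I (brk q (degW θ [j, k, l]) (δ θ k) (xw q [j, k, l]) (gen θ k)) := by
  rw [PrimitiveMod, S.Δ_brk_xw_three hk hjl hjkl, add_sub_cancel_left]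
  refine add_mem (add_mem (Submodule.smul_mem _ _ ?_) (Submodule.smul_mem _ _ ?_))
    (Submodule.smul_mem _ _ ?_)
  · exact tmul_mem_mixedSub_right _ (hI.xw_two_mul_add_mem hsq hjkl)
  · exact tmul_mem_mixedSub_left _ (hI.brk_xw_two_mem hk hsq)
  · exact hI.brkTensor_mem_left (tmul_mem_mixedSub_right _ hx) _

end Primitivity

/-! ### The relation in rank four -/

section Relation

variable {θ : ℕ} {q : Fin θ → Fin θ → ℂˣ} {S : BraidedStr θ q} {I : Submodule ℂ (TV θ)}
  {p ζ : ℂ} {i j k l : Fin θ}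

/-- The vertices `i`, `j`, `k`, `l` span a Dynkin diagram that is a chain with vertex labels
`-1, p⁻¹, -1, q l l` and edge labels `p, p, p ^ 3`. -/
structure IsChain (q : Fin θ → Fin θ → ℂˣ) (p : ℂ) (i j k l : Fin θ) : Prop where
  diag_i : (q i i : ℂ) = -1
  diag_j : (q j j : ℂ) = p⁻¹
  diag_k : (q k k : ℂ) = -1
  edge_ij : qtil q i j = p
  edge_jk : qtil q j k = p
  edge_kl : qtil q k l = p ^ 3
  edge_ik : qtil q i k = 1
  edge_il : qtil q i l = 1
  edge_jl : qtil q j l = 1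

lemma IsChain.injective (h : IsChain q p i j k l) {N : ℕ} (hp : IsPrimitiveRoot p N)
    (hN : 3 < N) : Function.Injective ![i, j, k, l] := by
  have hp1 : p ≠ 1 := hp.ne_one (by omega)
  have hp2 : p ^ 2 ≠ 1 := hp.pow_ne_one_of_pos_of_lt two_ne_zero (by omega)
  have hp3 : p ^ 3 ≠ 1 := hp.pow_ne_one_of_pos_of_lt three_ne_zero hN
  have hij : i ≠ j := by
    rintro rfl
    exact hp2 (by rw [← inv_inv p, ← h.diag_j, h.diag_i]; norm_num)
  have hjk : j ≠ k := by
    rintro rfl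
    exact hp2 (by rw [← inv_inv p, ← h.diag_j, h.diag_k]; norm_num)
  have hik : i ≠ k := by
    rintro rfl
    exact hp3 (h.edge_kl.symm.trans h.edge_il)
  have hil : i ≠ l := by
    rintro rfl
    exact hp1 (h.edge_ij.symm.trans ((qtil_comm _ _).trans h.edge_jl))
  have hjl : j ≠ l := by
    rintro rfl
    exact hp1 (h.edge_ij.symm.trans h.edge_il)
  have hkl : k ≠ l := by
    rintro rfl
    exact hp1 (h.edge_jk.symm.trans h.edge_jl)
  intro a b
  fin_cases a <;> fin_cases b <;>
    simp [hij, hik, hil, hjk, hjl, hkl, hij.symm, hik.symm, hil.symm, hjk.symm, hjl.symm, hkl.symm]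

lemma coe_subMat {n : ℕ} (dg : Fin n → Fin θ → ℕ) (a b : Fin n) :
    (subMat q dg a b : ℂ) = qf q (dg a) (dg b) := rfl

lemma qtil_subMat {n : ℕ} (dg : Fin n → Fin θ → ℕ) (a b : Fin n) :
    qtil (subMat q dg) a b = qf q (dg a) (dg b) * qf q (dg b) (dg a) := rfl

lemma IsChain.expDiagram (h : IsChain q p i j k l) {r : ℤ} (hr : p ^ r = -1) :
    ExpDiagram p ![1, 1, 1, q l l] (chainExp r 0) (subMat q fun a => δ θ (![i, j, k, l] a)) := by
  obtain ⟨hi, hj, hk, hij, hjk, hkl, hik, hil, hjl⟩ := h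
  refine .of_lt (fun a b => ?_) (fun a => ?_) fun a b hab => ?_
  · fin_cases a <;> fin_cases b <;> rfl
  · rw [coe_subMat, qf_delta]
    fin_cases a <;> simp [chainExp, *]
  · rw [qtil_subMat, qf_delta, qf_delta, ← qtil]
    fin_cases a <;> fin_cases b <;> simp_all [chainExp, zpow_ofNat]

lemma xw_two_mem (hAAH : AAH) (hI : IsPreNicholsIdeal S I) (hGK : FinGK I) {a b : Fin θ}
    (hab : qtil q a b = 1) (hd : (q a a : ℂ) * q b b = 1) (hj : qtil q a j * qtil q b j ≠ 1) :
    xw q [a, b] ∈ I := by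
  refine mem_of_not_hasFiniteOrbits_subMat hAAH hI hGK (ι := ![j])
    (Function.injective_of_subsingleton _) (length_eq_sum_degW [a, b]).le
    (xw_mem_homogD _) (primitiveMod_xw_two hab) fun h => hj ?_
  refine Eq.trans ?_ (h.qtil_eq_one_of_diag_eq_one (a := 0) (b := 1) (by decide) ?_)
  · rw [qtil_subMat, qtil, qtil]
    simp only [Matrix.cons_val_zero, Matrix.cons_val_one, Matrix.cons_val_fin_one, degW_cons,
      degW_nil, add_zero, qf_add_left, qf_add_right, qf_delta]
    ring
  · rw [qtil] at hab
    simp only [coe_subMat, Matrix.cons_val_zero, degW_cons, degW_nil, add_zero, qf_add_left,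
      qf_add_right, qf_delta]
    linear_combination (q a a : ℂ) * q b b * hab + hd

lemma gen_mul_self_mem_of_xw_mem (hk : (q k k : ℂ) = -1) (hx : xw q [k, k] ∈ I) :
    gen θ k * gen θ k ∈ I := by
  have h : xw q [k, k] = (2 : ℂ) • (gen θ k * gen θ k) := by
    rw [xw_two, brk, qf_delta, hk]
    module
  exact (I.smul_mem_iff two_ne_zero).1 (h ▸ hx)

lemma expDiagram_pair (hζ : IsPrimitiveRoot ζ 24) {x : ℤ} (hjl : qtil q j l = 1)
    (hj : (q j j : ℂ) = ζ ^ (-6 : ℤ)) (hl : (q l l : ℂ) = ζ ^ x) :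
    ExpDiagram ζ 1 ![![x - 6, 12], ![12, -6]]
      (subMat q (Matrix.vecCons (degW θ [j, l]) fun a => δ θ (![j] a))) := by
  have hxl : ζ ^ (x - 6) = q j j * q l l := by
    rw [hj, hl, ← zpow_add₀ (hζ.ne_zero (by norm_num)), neg_add_eq_sub]
  have h12 : ζ ^ (12 : ℤ) = (q j j : ℂ) ^ 2 := by
    rw [hj, ← zpow_natCast, ← zpow_mul, ← zpow_emod hζ, ← zpow_emod hζ (-6 * _)]
    norm_num
  rw [qtil] at hjl
  refine .of_lt (fun a b => ?_) (fun a => ?_) fun a b hab => ?_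
  · fin_cases a <;> fin_cases b <;> rfl
  · rw [coe_subMat]
    refine Fin.cases ?_ (fun b => ?_) a
    · simp only [Matrix.cons_val_zero, Pi.one_apply, mul_one, hxl, degW_cons, degW_nil, add_zero,
        qf_add_left, qf_add_right, qf_delta]
      linear_combination (q j j : ℂ) * q l l * hjl
    · fin_cases b
      simp [qf_delta, hj]
  · obtain ⟨rfl, rfl⟩ : a = 0 ∧ b = 1 := by decide +revert
    simp only [qtil_subMat, Matrix.cons_val_zero, Matrix.cons_val_one, Matrix.cons_val_fin_one,
      degW_cons, degW_nil, add_zero, qf_add_left, qf_add_right, qf_delta, h12]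
    linear_combination (q j j : ℂ) ^ 2 * hjl

lemma IsChain.expDiagram_triple (h : IsChain q p i j k l) (hζ : IsPrimitiveRoot ζ 24)
    (hp : ζ ^ 6 = p) {x : ℕ} (hl : (q l l : ℂ) = ζ ^ x) :
    ExpDiagram ζ 1 ![![x + 18, 6, 0], ![6, 12, 6], ![0, 6, -6]]
      (subMat q (Matrix.vecCons (degW θ [j, k, l] + δ θ k) fun a => δ θ (![i, j] a))) := by
  have hp4 : p ^ 4 = 1 := by rw [← hp, ← pow_mul, hζ.pow_eq_one]
  have hp0 : p * p⁻¹ = 1 := mul_inv_cancel₀ fun h0 => by simp [h0] at hp4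
  have h6 : ζ ^ (6 : ℤ) = p := by exact_mod_cast hp
  have h12 : ζ ^ (12 : ℤ) = -1 := by
    exact_mod_cast (hζ.pow (by norm_num) (show 24 = 12 * 2 by norm_num)).eq_neg_one_of_two_right
  have hx : ζ ^ ((x : ℤ) + 18) = p ^ 3 * q l l := by
    rw [hl, ← hp, ← pow_mul, ← pow_add, add_comm]
    exact_mod_cast rfl
  obtain ⟨hi, hj, hk, hij, hjk, hkl, hik, hil, hjl⟩ := h
  simp only [qtil] at hij hjk hkl hik hil hjl
  refine .of_lt (fun a b => ?_) (fun a => ?_) fun a b hab => ?_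
  · fin_cases a <;> fin_cases b <;> rfl
  · rw [coe_subMat]
    refine Fin.cases ?_ (fun b => ?_) a
    · simp only [Matrix.cons_val_zero, Pi.one_apply, mul_one, degW_cons, degW_nil, add_zero,
        qf_add_left, qf_add_right, qf_delta, hx]
      grind
    · fin_cases b
      · simp [qf_delta, h12, hi]
      · simp [qf_delta, h6, hj, zpow_neg]
  · rw [qtil_subMat]
    obtain ⟨rfl, rfl⟩ | ⟨rfl, rfl⟩ | ⟨rfl, rfl⟩ :
      a = 0 ∧ b = 1 ∨ a = 0 ∧ b = 2 ∨ a = 1 ∧ b = 2 := by decide +revert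
    all_goals
      simp only [Matrix.cons_val, degW_cons, degW_nil, add_zero, qf_add_left, qf_add_right,
        qf_delta, h6, zpow_zero]
      grind

lemma IsChain.brk_xw_three_mem (hAAH : AAH) (hI : IsPreNicholsIdeal S I) (hGK : FinGK I)
    (h : IsChain q p i j k l) (hζ : IsPrimitiveRoot ζ 24) (hp : ζ ^ 6 = p) {x : ℕ}
    (hx : x ∈ chainExponents) (hl : (q l l : ℂ) = ζ ^ x) (hsq : gen θ k * gen θ k ∈ I) :
    brk q (degW θ [j, k, l]) (δ θ k) (xw q [j, k, l]) (gen θ k) ∈ I := by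
  have hp4 : IsPrimitiveRoot p 4 := hp ▸ hζ.pow (by norm_num) rfl
  have hij : i ≠ j := (h.injective hp4 (by norm_num)).ne (a₁ := 0) (a₂ := 1) (by decide)
  have hpp : qtil q j k * qtil q k l = 1 := by
    rw [h.edge_jk, h.edge_kl, ← pow_succ', hp4.pow_eq_one]
  have hj : (q j j : ℂ) = ζ ^ (-6 : ℤ) := by
    rw [h.diag_j, ← hp, zpow_neg]
    norm_cast
  have hxjl : xw q [j, l] ∈ I :=
    mem_of_not_hasFiniteOrbits_subMat hAAH hI hGK (ι := ![j])
      (Function.injective_of_subsingleton _) (length_eq_sum_degW [j, l]).le (xw_mem_homogD _)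
      (primitiveMod_xw_two h.edge_jl)
      (not_hasFiniteOrbits_of_pair hζ hx (expDiagram_pair hζ h.edge_jl hj (mod_cast hl)))
  refine mem_of_not_hasFiniteOrbits_subMat hAAH hI hGK (ι := ![i, j])
    (injective_pair_iff_ne.2 hij)
    ((show 2 ≤ 3 by norm_num).trans ((length_eq_sum_degW [j, k, l]).trans_le
      (Finset.sum_le_sum fun t _ => Nat.le_add_right _ _)))
    (brk_mem_homogD (xw_mem_homogD _) (gen_mem_homogD k))
    (primitiveMod_brk_xw_three hI h.diag_k h.edge_jl hpp hsq hxjl)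
    (not_hasFiniteOrbits_of_triple hζ hx (h.expDiagram_triple hζ hp hl))

lemma IsPreNicholsIdeal.brk_xw_four_mem (hI : IsPreNicholsIdeal S I) (hik : xw q [i, k] ∈ I)
    (hjkl : brk q (degW θ [j, k, l]) (δ θ k) (xw q [j, k, l]) (gen θ k) ∈ I) :
    brk q (degW θ [i, j, k, l]) (δ θ k) (xw q [i, j, k, l]) (gen θ k) ∈ I := by
  have hxw : xw q [i, j, k, l] =
      brk q (δ θ i) (degW θ [j, k, l]) (gen θ i) (xw q [j, k, l]) := rfl
  have key : brk q (degW θ [i, j, k, l]) (δ θ k) (xw q [i, j, k, l]) (gen θ k) =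
      (gen θ i * brk q (degW θ [j, k, l]) (δ θ k) (xw q [j, k, l]) (gen θ k) -
      (qf q (δ θ i) (degW θ [j, k, l]) * q i k) •
        (brk q (degW θ [j, k, l]) (δ θ k) (xw q [j, k, l]) (gen θ k) * gen θ i)) +
      (qf q (degW θ [j, k, l]) (δ θ k) • (xw q [i, k] * xw q [j, k, l]) -
      qf q (δ θ i) (degW θ [j, k, l]) • (xw q [j, k, l] * xw q [i, k])) := by
    rw [hxw, xw_two, degW_cons i]
    generalize xw q [j, k, l] = u, degW θ [j, k, l] = d
    simp only [brk, qf_add_left, qf_delta, mul_sub, sub_mul, smul_mul_assoc, mul_smul_comm,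
      mul_assoc, smul_sub]
    module
  rw [key]
  exact add_mem
    (sub_mem (hI.mul_left _ _ hjkl) (Submodule.smul_mem _ _ (hI.mul_right _ _ hjkl)))
    (sub_mem (Submodule.smul_mem _ _ (hI.mul_right _ _ hik))
      (Submodule.smul_mem _ _ (hI.mul_left _ _ hik)))

lemma IsChain.brk_xw_four_mem (hAAH : AAH) (hI : IsPreNicholsIdeal S I) (hGK : FinGK I)
    (h : IsChain q p i j k l) (hp : IsPrimitiveRoot p 4) :
    brk q (degW θ [i, j, k, l]) (δ θ k) (xw q [i, j, k, l]) (gen θ k) ∈ I := by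
  have hp2 : p * p = -1 := by rw [← sq, sq_eq_neg_one hp]
  have hinj := h.injective hp (by norm_num)
  obtain ⟨ζ, hζ, hζp⟩ := exists_isPrimitiveRoot_pow_eq_of_order_four hp
  obtain ⟨x, hx, hl⟩ := chain_four_exists_exponent hζ (hasFiniteOrbits_subMat_gen hAAH hI hGK hinj)
    (hζp ▸ h.expDiagram (r := 2) (mod_cast sq_eq_neg_one hp))
  have hxik : xw q [i, k] ∈ I := xw_two_mem (j := j) hAAH hI hGK h.edge_ik
    (by rw [h.diag_i, h.diag_k]; norm_num)
    (by rw [h.edge_ij, qtil_comm, h.edge_jk, hp2]; norm_num)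
  have hxkk : xw q [k, k] ∈ I := xw_two_mem (j := j) hAAH hI hGK
    (by rw [qtil_self, h.diag_k]; norm_num) (by rw [h.diag_k]; norm_num)
    (by rw [qtil_comm, h.edge_jk, hp2]; norm_num)
  exact hI.brk_xw_four_mem hxik (h.brk_xw_three_mem hAAH hI hGK hζ hζp hx hl
    (gen_mul_self_mem_of_xw_mem h.diag_k hxkk))

end Relation

theorem statement_10_general {θ : ℕ} {q : Fin θ → Fin θ → ℂˣ} {S : BraidedStr θ q} (hAAH : AAH)
    {I : Submodule ℂ (TV θ)} (hI : IsPreNicholsIdeal S I) (hGK : FinGK I) {p : ℂ}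
    (hp : IsPrimitiveRoot p 4 ∨ IsPrimitiveRoot p 6) {i j k l : Fin θ}
    (h : IsChain q p i j k l) :
    brk q
      (δ θ i + δ θ j + δ θ k + (δ θ i + δ θ j + δ θ k + δ θ l + δ θ k))
      (δ θ j + δ θ k)
      (brk q (δ θ i + δ θ j + δ θ k) (δ θ i + δ θ j + δ θ k + δ θ l + δ θ k)
        (xw q [i, j, k])
        (brk q (δ θ i + δ θ j + δ θ k + δ θ l) (δ θ k) (xw q [i, j, k, l]) (gen θ k)))
      (xw q [j, k]) ∈ I := by
  rcases hp with hp | hp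
  · have hmem := h.brk_xw_four_mem hAAH hI hGK hp
    simp only [degW_cons, degW_nil, add_zero, ← add_assoc] at hmem
    exact hI.brk_mem_left (hI.brk_mem_right hmem)
  · have hinj := h.injective hp (by norm_num)
    exact (not_hasFiniteOrbits_of_chain_six hp
      (h.expDiagram (r := 3) (mod_cast pow_three_eq_neg_one hp))
      (hasFiniteOrbits_subMat_gen hAAH hI hGK hinj)).elim

/-- Lemma 3.6: if `q̃_{jk} = q̃_{ij} = q_{jj}⁻¹ ∈ G₄' ∪ G₆'`,
`q_{ii} = q_{kk} = -1`, `q̃_{ik} = q̃_{iℓ} = q̃_{jℓ} = 1` and `q̃_{jk}³ = q̃_{ℓk}`,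
then `[[x_{ijk},[x_{ijkℓ},x_k]_c]_c,x_{jk}]_c = 0` in every finite-GKdim
pre-Nichols algebra of `q`. -/
theorem statement_10 (θ : ℕ) (q : Fin θ → Fin θ → ℂˣ) (S : BraidedStr θ q)
    (hconn : (dynkin q).Connected)
    (hfd : FiniteDimensional ℂ (TV θ ⧸ Jq S))
    (hAAH : AAH)
    (I : Submodule ℂ (TV θ)) (hI : IsPreNicholsIdeal S I) (hGK : FinGK I)
    (i j k l : Fin θ) (hij : i ≠ j) (hik : i ≠ k) (hil : i ≠ l)
    (hjk : j ≠ k) (hjl : j ≠ l) (hkl : k ≠ l)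
    (h1 : qtil q j k = ((q j j : ℂ))⁻¹) (h2 : qtil q i j = ((q j j : ℂ))⁻¹)
    (h3 : IsPrimitiveRoot ((q j j : ℂ))⁻¹ 4 ∨ IsPrimitiveRoot ((q j j : ℂ))⁻¹ 6)
    (h4 : (q i i : ℂ) = -1) (h5 : (q k k : ℂ) = -1)
    (h6 : qtil q i k = 1) (h7 : qtil q i l = 1) (h8 : qtil q j l = 1)
    (h9 : qtil q j k ^ 3 = qtil q l k) :
    brk q
      (δ θ i + δ θ j + δ θ k + (δ θ i + δ θ j + δ θ k + δ θ l + δ θ k))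
      (δ θ j + δ θ k)
      (brk q (δ θ i + δ θ j + δ θ k) (δ θ i + δ θ j + δ θ k + δ θ l + δ θ k)
        (xw q [i, j, k])
        (brk q (δ θ i + δ θ j + δ θ k + δ θ l) (δ θ k) (xw q [i, j, k, l]) (gen θ k)))
      (xw q [j, k]) ∈ I :=
  statement_10_general hAAH hI hGK h3
    ⟨h4, (inv_inv _).symm, h5, h2, h1, by rw [qtil_comm, ← h9, h1], h6, h7, h8⟩

end PreNicholsPaper
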